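/- arXiv:1110.0898 — 10 statements merged into one kernel-verified Lean document; each statement's English description precedes it below -/
import Mathlib

section
/- Let n ≥ 2, let (x_k) be a sequence in ℝⁿ and (v_k) a sequence of unit vectors of ℝⁿ. Assume (i) ‖x_k‖ → ∞ as k → ∞, and (ii) for every unit vector v that is a cluster value of (v_k), the vector −v is not a cluster value of the sequence (x_k/‖x_k‖). Then the half-lines [x_k, v_k) := {x_k + t·v_k : t ≥ 0} leave every compact subset of ℝⁿ: for every R > 0 there exists N such that for all k ≥ N and all t ≥ 0 one has ‖x_k + t·v_k‖ > R. -/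
open Filter Topology

/-!
Write `u k = x k / ‖x k‖`. Every point of the half-line issued from `x k` in the direction `v k` has
norm at least `‖x k‖ * ‖u k + v k‖ / 2`. Compactness of the unit sphere and the absence of common
cluster values of `v` and `-u` keep `‖u k + v k‖` away from `0`, so this lower bound tends to
infinity with `‖x k‖`.
-/

section Distance

variable {ι X : Type*} [PseudoMetricSpace X] {l : Filter ι} {f g : ι → X} {K : Set X}

theorem exists_pos_eventually_le_dist_of_isCompact (hK : IsCompact K) (hf : ∀ᶠ k in l, f k ∈ K)
    (hfg : ∀ w ∈ K, MapClusterPt w l f → ¬ MapClusterPt w l g) :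
    ∃ δ > 0, ∀ᶠ k in l, δ ≤ dist (f k) (g k) := by
  by_contra! hclose
  have hzero : MapClusterPt 0 l (fun k => dist (f k) (g k)) :=
    Metric.nhds_basis_ball.mapClusterPt_iff_frequently.2 fun δ hδ =>
      (hclose δ hδ).mono fun k hk => by simpa using hk
  obtain ⟨U, hU, hdist⟩ := mapClusterPt_iff_ultrafilter.1 hzero
  obtain ⟨w, hwK, hfw⟩ := hK.ultrafilter_le_nhds' (U.map f) (hU hf)
  have hgw : Tendsto g U (𝓝 w) := Tendsto.congr_dist hfw hdist
  exact hfg w hwK (mapClusterPt_iff_ultrafilter.2 ⟨U, hU, hfw⟩)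
    (mapClusterPt_iff_ultrafilter.2 ⟨U, hU, hgw⟩)

end Distance

section HalfLine

variable {E : Type*} [SeminormedAddCommGroup E] [NormedSpace ℝ E]

theorem norm_smul_add_norm_smul_le_of_nonneg (x v : E) {t : ℝ} (ht : 0 ≤ t) :
    ‖‖v‖ • x + ‖x‖ • v‖ ≤ 2 * (‖v‖ * ‖x + t • v‖) := by
  have habs : |‖x‖ - t * ‖v‖| ≤ ‖x + t • v‖ := by
    simpa [norm_smul, abs_of_nonneg ht] using abs_norm_sub_norm_le x (-(t • v))
  calc ‖‖v‖ • x + ‖x‖ • v‖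
      = ‖‖v‖ • (x + t • v) + (‖x‖ - t * ‖v‖) • v‖ := by congr 1; module
    _ ≤ ‖‖v‖ • (x + t • v)‖ + ‖(‖x‖ - t * ‖v‖) • v‖ := norm_add_le _ _
    _ = ‖v‖ * ‖x + t • v‖ + |‖x‖ - t * ‖v‖| * ‖v‖ := by
        simp only [norm_smul, Real.norm_eq_abs, abs_norm]
    _ ≤ ‖v‖ * ‖x + t • v‖ + ‖x + t • v‖ * ‖v‖ := by gcongr
    _ = 2 * (‖v‖ * ‖x + t • v‖) := by ring

theorem norm_mul_norm_inv_smul_add_le_of_nonneg (x : E) {v : E} (hv : ‖v‖ = 1) {t : ℝ}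
    (ht : 0 ≤ t) : ‖x‖ * ‖‖x‖⁻¹ • x + v‖ ≤ 2 * ‖x + t • v‖ := by
  rcases eq_or_ne ‖x‖ 0 with hx | hx
  · simp [hx]
  · calc ‖x‖ * ‖‖x‖⁻¹ • x + v‖
        = ‖‖x‖ • (‖x‖⁻¹ • x + v)‖ := by rw [norm_smul, norm_norm]
      _ = ‖‖v‖ • x + ‖x‖ • v‖ := by rw [smul_add, smul_inv_smul₀ hx, hv, one_smul]
      _ ≤ 2 * ‖x + t • v‖ := by
          simpa [hv] using norm_smul_add_norm_smul_le_of_nonneg x v ht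

variable {ι : Type*} {l : Filter ι} {x v : ι → E}

theorem exists_pos_eventually_le_norm_inv_smul_add [ProperSpace E] (hv : ∀ᶠ k in l, ‖v k‖ = 1)
    (hcluster : ∀ w : E, ‖w‖ = 1 → MapClusterPt w l v →
      ¬ MapClusterPt (-w) l (fun k => ‖x k‖⁻¹ • x k)) :
    ∃ δ > 0, ∀ᶠ k in l, δ ≤ ‖‖x k‖⁻¹ • x k + v k‖ := by
  have hsep : ∃ δ > 0, ∀ᶠ k in l, δ ≤ dist (v k) (-(‖x k‖⁻¹ • x k)) := by
    refine exists_pos_eventually_le_dist_of_isCompact (isCompact_sphere (0 : E) 1)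
      (by simpa using hv) fun w hw hwv hwx => hcluster w (by simpa using hw) hwv ?_
    simpa [Function.comp_def] using hwx.continuousAt_comp continuous_neg.continuousAt
  simpa [dist_eq_norm, add_comm] using hsep

theorem halfLines_leave_compacts_general [ProperSpace E] (hv : ∀ᶠ k in l, ‖v k‖ = 1)
    (hx : Tendsto (fun k => ‖x k‖) l atTop)
    (hcluster : ∀ w : E, ‖w‖ = 1 → MapClusterPt w l v →
      ¬ MapClusterPt (-w) l (fun k => ‖x k‖⁻¹ • x k)) (R : ℝ) :
    ∀ᶠ k in l, ∀ t : ℝ, 0 ≤ t → R < ‖x k + t • v k‖ := by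
  obtain ⟨δ, hδ, hsep⟩ := exists_pos_eventually_le_norm_inv_smul_add hv hcluster
  have hlarge : ∀ᶠ k in l, 2 * R < ‖x k‖ * δ :=
    (hx.atTop_mul_const hδ).eventually_gt_atTop (2 * R)
  filter_upwards [hv, hsep, hlarge] with k hvk hsepk hlargek t ht
  have hbound : ‖x k‖ * δ ≤ 2 * ‖x k + t • v k‖ :=
    (mul_le_mul_of_nonneg_left hsepk (norm_nonneg _)).trans
      (norm_mul_norm_inv_smul_add_le_of_nonneg (x k) hvk ht)
  linarith

end HalfLine

/-- half-lines `[x_k, v_k)` leave every compact subset of ℝⁿ. -/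
theorem halfLines_leave_compacts
    (n : ℕ) (hn : 2 ≤ n)
    (x v : ℕ → EuclideanSpace ℝ (Fin n))
    (hv : ∀ k, ‖v k‖ = 1)
    (hx : Tendsto (fun k => ‖x k‖) atTop atTop)
    (hcluster : ∀ w : EuclideanSpace ℝ (Fin n), ‖w‖ = 1 →
      MapClusterPt w atTop v →
      ¬ MapClusterPt (-w) atTop (fun k => ‖x k‖⁻¹ • x k)) :
    ∀ R > 0, ∃ N : ℕ, ∀ k ≥ N, ∀ t : ℝ, 0 ≤ t → ‖x k + t • v k‖ > R :=
  fun R _ => eventually_atTop.1 (halfLines_leave_compacts_general (.of_forall hv) hx hcluster R)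
end

section
/- Let n ≥ 2. For each k ∈ ℕ let p_k : ℝⁿ → ℝⁿ be the affine conformal map p_k(x) = λ_k • (A_k x) + b_k, where λ_k > 0, A_k is a linear isometric automorphism of ℝⁿ and b_k ∈ ℝⁿ. Assume the sequence (p_k) tends to infinity in the affine conformal group, i.e. max(λ_k, 1/λ_k, ‖b_k‖) → ∞. Then there is a strictly increasing map φ : ℕ → ℕ such that at least one of the following holds: (1) for every r > 0, every unit vector w and every ε > 0 there exist a unit vector w′ and ε′ > 0 with {v ∈ Sⁿ⁻¹ : ‖v − w′‖ ≤ ε′} ⊆ {v ∈ Sⁿ⁻¹ : ‖v − w‖ ≤ ε}, such that for every R > 0 there is N with ‖p_{φ(k)}(t • v)‖ > R for all k ≥ N, all t ≥ 1/r and all v ∈ Sⁿ⁻¹ with ‖v − w′‖ ≤ ε′; or (2) there exist affine conformal maps l_k(y) = m_k • (B_k y) + c_k with m_k → m_∞ ∈ (0,∞), B_k converging (in operator norm) to a linear isometric automorphism B_∞, c_k → c_∞ ∈ ℝⁿ, and positive reals s_k with s_k → 0, such that l_k(p_{φ(k)}(x)) = s_k • x for all x ∈ ℝⁿ and all k. 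-/
open Filter Topology

/-!
Write `p_k x = λ_k • A_k x + b_k`. Since `A_k` is an isometry, `‖p_k x‖ = ‖λ_k • x - z_k‖` with
`z_k = -A_k⁻¹ b_k`, a vector of norm `‖b_k‖` pointing to the zero of `p_k`. By the Massera–Schäffer
inequality, `‖p_k x‖` is at least `max ‖λ_k • x‖ ‖b_k‖` times half the distance between the
directions of `x` and `z_k`.

If `max λ_k ‖b_k‖ → ∞`, pass to a subsequence along which the direction of `z_k` converges: the
cones over caps that avoid the limit direction escape to infinity, and every cap contains such a cap
because the sphere has no isolated points. Otherwise `λ_k` and `b_k` stay bounded along a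
subsequence, so `λ_k → 0` by unboundedness, and `p_k` followed by `y ↦ A_k⁻¹ y - A_k⁻¹ b_k` is the
homothety of ratio `λ_k`; a further subsequence makes `A_k⁻¹` and `b_k` converge.
-/

theorem tendsto_atTop_of_max_of_eventually_le {ι α : Type*} [LinearOrder α] [NoMaxOrder α]
    {l : Filter ι} {f g : ι → α} {C : α} (hmax : Tendsto (fun i => max (f i) (g i)) l atTop)
    (hf : ∀ᶠ i in l, f i ≤ C) : Tendsto g l atTop := by
  refine tendsto_atTop.mpr fun R => ?_
  filter_upwards [hf, hmax.eventually_gt_atTop (max C R)] with i hfC hi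
  have hCg : max C R < g i :=
    (lt_max_iff.mp hi).resolve_left (hfC.trans (le_max_left C R)).not_gt
  exact (le_max_right C R).trans hCg.le

theorem tendsto_zero_of_tendsto_max_inv_of_eventually_le {ι : Type*} {l : Filter ι} {f g : ι → ℝ}
    {C : ℝ} (hunbounded : Tendsto (fun i => max (max (f i) (f i)⁻¹) (g i)) l atTop)
    (hbounded : ∀ᶠ i in l, max (f i) (g i) ≤ C) : Tendsto f l (𝓝 0) := by
  simp only [max_right_comm (f _)] at hunbounded
  simpa only [Pi.inv_def, inv_inv] using
    (tendsto_atTop_of_max_of_eventually_le hunbounded hbounded).inv_tendsto_atTop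

theorem min_one_mul_max_le_max_mul {a b c : ℝ} (ha : 0 ≤ a) (hb : 0 ≤ b) (hc : 0 ≤ c) :
    min c 1 * max a b ≤ max (a * c) b := by
  rw [mul_max_of_nonneg _ _ (le_min hc zero_le_one), mul_comm a c]
  exact max_le_max (mul_le_mul_of_nonneg_right (min_le_left c 1) ha)
    (mul_le_of_le_one_left hb (min_le_right c 1))

theorem exists_toContinuousLinearMap_eq_of_tendsto {𝕜 E F ι : Type*} [NontriviallyNormedField 𝕜]
    [NormedAddCommGroup E] [NormedSpace 𝕜 E] [NormedAddCommGroup F] [NormedSpace 𝕜 F]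
    {l : Filter ι} [l.NeBot] {B : ι → E →ₗᵢ[𝕜] F} {L : E →L[𝕜] F}
    (h : Tendsto (fun i => (B i).toContinuousLinearMap) l (𝓝 L)) :
    ∃ B₀ : E →ₗᵢ[𝕜] F, B₀.toContinuousLinearMap = L := by
  have hnorm (x : E) : ‖L x‖ = ‖x‖ := by
    have hx : Tendsto (fun i => ‖B i x‖) l (𝓝 ‖L x‖) :=
      ((ContinuousLinearMap.apply 𝕜 F x).continuous.tendsto L |>.comp h).norm
    simp only [LinearIsometry.norm_map] at hx
    exact tendsto_nhds_unique hx tendsto_const_nhds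
  exact ⟨⟨L.toLinearMap, hnorm⟩, rfl⟩

section NormedSpace

variable {E : Type*} [NormedAddCommGroup E] [NormedSpace ℝ E]

theorem preperfect_sphere (hrank : 1 < Module.rank ℝ E) (x : E) {r : ℝ} (hr : r ≠ 0) :
    Preperfect (Metric.sphere x r) := by
  refine fun y hy => (isPreconnected_sphere hrank x r).preperfect_of_nontrivial
    ⟨y, hy, AffineEquiv.pointReflection ℝ x y, ?_, ?_⟩ y hy
  · exact (dist_pointReflection_left x y).trans (Metric.mem_sphere'.mp hy)
  · rw [ne_comm, Ne, AffineEquiv.pointReflection_fixed_iff_of_module]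
    exact Metric.ne_of_mem_sphere hy hr

theorem norm_normalize_le_one (x : E) : ‖NormedSpace.normalize x‖ ≤ 1 := by
  by_cases hx : x = 0
  · simp [hx]
  · exact (NormedSpace.norm_normalize hx).le

theorem norm_mul_norm_normalize_sub_normalize_le (x y : E) :
    ‖x‖ * ‖NormedSpace.normalize x - NormedSpace.normalize y‖ ≤ 2 * ‖x - y‖ := by
  have hdecomp : ‖x‖ • (NormedSpace.normalize x - NormedSpace.normalize y) =
      (x - y) + (‖y‖ - ‖x‖) • NormedSpace.normalize y := by
    simp only [smul_sub, sub_smul, NormedSpace.norm_smul_normalize]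
    abel
  calc ‖x‖ * ‖NormedSpace.normalize x - NormedSpace.normalize y‖
      = ‖(x - y) + (‖y‖ - ‖x‖) • NormedSpace.normalize y‖ := by
        rw [← hdecomp, norm_smul, norm_norm]
    _ ≤ ‖x - y‖ + |‖y‖ - ‖x‖| * ‖NormedSpace.normalize y‖ := by
        rw [← Real.norm_eq_abs, ← norm_smul]
        exact norm_add_le _ _
    _ ≤ ‖x - y‖ + ‖x - y‖ * 1 := by
        gcongr
        · exact norm_sub_rev x y ▸ abs_norm_sub_norm_le y x
        · exact norm_normalize_le_one y
    _ = 2 * ‖x - y‖ := by ring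

theorem max_norm_mul_norm_normalize_sub_normalize_le (x y : E) :
    max ‖x‖ ‖y‖ * ‖NormedSpace.normalize x - NormedSpace.normalize y‖ ≤ 2 * ‖x - y‖ := by
  rw [max_mul_of_nonneg _ _ (norm_nonneg _)]
  refine max_le (norm_mul_norm_normalize_sub_normalize_le x y) ?_
  simpa only [norm_sub_rev] using norm_mul_norm_normalize_sub_normalize_le y x

/-- The spherical cap with centre `w` and radius `ε` for the chordal distance on the unit sphere. -/
def sphericalCap (w : E) (ε : ℝ) : Set E := {v | ‖v‖ = 1 ∧ ‖v - w‖ ≤ ε}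

theorem exists_sphericalCap_subset_of_ne (hrank : 1 < Module.rank ℝ E) {w : E} (hw : ‖w‖ = 1)
    {ε : ℝ} (hε : 0 < ε) (d : E) :
    ∃ w' : E, ‖w'‖ = 1 ∧ ∃ ε' > 0, sphericalCap w' ε' ⊆ sphericalCap w ε ∧
      ∃ η > 0, ∀ v ∈ sphericalCap w' ε', η ≤ ‖v - d‖ := by
  have hnear : ∃ w' : E, ‖w'‖ = 1 ∧ ‖w' - w‖ < ε / 2 ∧ w' ≠ d := by
    by_cases hwd : w = d
    · obtain ⟨w', ⟨hball, hsphere⟩, hne⟩ :=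
        preperfect_iff_nhds.mp (preperfect_sphere hrank 0 one_ne_zero) w (by simpa using hw)
          _ (Metric.ball_mem_nhds w (half_pos hε))
      exact ⟨w', by simpa using hsphere, by simpa [dist_eq_norm] using hball, hwd ▸ hne⟩
    · exact ⟨w, hw, by simpa using hε, hwd⟩
  obtain ⟨w', hw', hww', hne⟩ := hnear
  have hη : 0 < ‖w' - d‖ := norm_sub_pos_iff.mpr hne
  refine ⟨w', hw', min (ε / 2) (‖w' - d‖ / 2), by positivity, ?_, ‖w' - d‖ / 2, by positivity, ?_⟩
  · rintro v ⟨hv, hvw'⟩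
    refine ⟨hv, ?_⟩
    linarith [norm_sub_le_norm_sub_add_norm_sub v w' w, le_min_iff.mp hvw']
  · rintro v ⟨-, hvw'⟩
    linarith [norm_sub_le_norm_sub_add_norm_sub w' v d, norm_sub_rev w' v, le_min_iff.mp hvw']

/-- The affine conformal map `x ↦ a • A x + b`, of ratio `a` when `0 < a`. -/
def affineConformal (a : ℝ) (A : E ≃ₗᵢ[ℝ] E) (b x : E) : E := a • A x + b

/-- The direction of the zero of `affineConformal a A b`, which is the same for all `0 < a`. It is
the zero vector when `b = 0`. -/
noncomputable def zeroDirection (A : E ≃ₗᵢ[ℝ] E) (b : E) : E :=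
  NormedSpace.normalize (-A.symm b)

theorem norm_affineConformal (a : ℝ) (A : E ≃ₗᵢ[ℝ] E) (b x : E) :
    ‖affineConformal a A b x‖ = ‖a • x - -A.symm b‖ := by
  rw [← A.norm_map (a • x - -A.symm b)]
  simp [affineConformal]

theorem max_mul_norm_sub_zeroDirection_le {a t : ℝ} (ha : 0 < a) (ht : 0 < t)
    (A : E ≃ₗᵢ[ℝ] E) (b : E) {v : E} (hv : ‖v‖ = 1) :
    max (a * t) ‖b‖ * ‖v - zeroDirection A b‖ ≤ 2 * ‖affineConformal a A b (t • v)‖ := by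
  have hat : 0 < a * t := mul_pos ha ht
  have h := max_norm_mul_norm_normalize_sub_normalize_le ((a * t) • v) (-A.symm b)
  rwa [NormedSpace.normalize_smul_of_pos hat, NormedSpace.normalize_eq_self_of_norm_eq_one hv,
    norm_smul, hv, mul_one, Real.norm_of_nonneg hat.le, norm_neg, A.symm.norm_map, mul_smul,
    ← norm_affineConformal] at h

theorem eventually_lt_norm_affineConformal_smul {ι : Type*} {l : Filter ι} {lam : ι → ℝ}
    (hlam : ∀ i, 0 < lam i) {A : ι → E ≃ₗᵢ[ℝ] E} {b : ι → E}
    (hmax : Tendsto (fun i => max (lam i) ‖b i‖) l atTop) {c η : ℝ} (hc : 0 < c) (hη : 0 < η)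
    (R : ℝ) :
    ∀ᶠ i in l, ∀ t ≥ c, ∀ v : E, ‖v‖ = 1 → η ≤ ‖v - zeroDirection (A i) (b i)‖ →
      R < ‖affineConformal (lam i) (A i) (b i) (t • v)‖ := by
  have hgrowth : Tendsto (fun i => min c 1 * max (lam i) ‖b i‖ * η) l atTop :=
    (hmax.const_mul_atTop (lt_min hc one_pos)).atTop_mul_const hη
  filter_upwards [hgrowth.eventually_gt_atTop (2 * R)] with i hi t ht v hv hηv
  have hlami := hlam i
  suffices 2 * R < 2 * ‖affineConformal (lam i) (A i) (b i) (t • v)‖ by linarith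
  calc 2 * R
      < min c 1 * max (lam i) ‖b i‖ * η := hi
    _ ≤ max (lam i * c) ‖b i‖ * η := by
        gcongr
        exact min_one_mul_max_le_max_mul hlami.le (norm_nonneg _) hc.le
    _ ≤ max (lam i * t) ‖b i‖ * ‖v - zeroDirection (A i) (b i)‖ := by gcongr
    _ ≤ 2 * ‖affineConformal (lam i) (A i) (b i) (t • v)‖ :=
        max_mul_norm_sub_zeroDirection_le hlami (hc.trans_le ht) (A i) (b i) hv

/-- The first alternative of the dichotomy, for a sequence `p` of self-maps: for every `r > 0`,
every spherical cap contains a cap such that the cone over it, truncated at distance `1 / r` from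
the origin, escapes to infinity under `p`. -/
def CapConesEscape (p : ℕ → E → E) : Prop :=
  ∀ r > (0 : ℝ), ∀ w : E, ‖w‖ = 1 → ∀ ε > (0 : ℝ),
    ∃ w' : E, ‖w'‖ = 1 ∧ ∃ ε' > (0 : ℝ), sphericalCap w' ε' ⊆ sphericalCap w ε ∧
      ∀ R > (0 : ℝ), ∀ᶠ k in atTop, ∀ t : ℝ, 1 / r ≤ t → ∀ v ∈ sphericalCap w' ε',
        R < ‖p k (t • v)‖

/-- The second alternative of the dichotomy, for a sequence `p` of self-maps: composing `p` with a
sequence of affine conformal maps that converges to an affine conformal map gives linear homotheties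
of positive ratios `s k → 0`. -/
def ReducesToVanishingHomotheties (p : ℕ → E → E) : Prop :=
  ∃ (m : ℕ → ℝ) (B : ℕ → (E ≃ₗᵢ[ℝ] E)) (c : ℕ → E) (minf : ℝ) (Binf : E ≃ₗᵢ[ℝ] E) (cinf : E)
    (s : ℕ → ℝ),
    (∀ k, 0 < m k) ∧ 0 < minf ∧ Tendsto m atTop (𝓝 minf) ∧
    Tendsto (fun k => ‖(B k).toLinearIsometry.toContinuousLinearMap
      - Binf.toLinearIsometry.toContinuousLinearMap‖) atTop (𝓝 0) ∧
    Tendsto c atTop (𝓝 cinf) ∧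
    (∀ k, 0 < s k) ∧ Tendsto s atTop (𝓝 0) ∧
    ∀ k x, affineConformal (m k) (B k) (c k) (p k x) = s k • x

section Sequence

variable {lam : ℕ → ℝ} {A : ℕ → E ≃ₗᵢ[ℝ] E} {b : ℕ → E}

theorem capConesEscape_of_tendsto_zeroDirection (hrank : 1 < Module.rank ℝ E)
    (hlam : ∀ k, 0 < lam k) (hmax : Tendsto (fun k => max (lam k) ‖b k‖) atTop atTop) {d : E}
    (hd : Tendsto (fun k => zeroDirection (A k) (b k)) atTop (𝓝 d)) :
    CapConesEscape (fun k => affineConformal (lam k) (A k) (b k)) := by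
  intro r hr w hw ε hε
  obtain ⟨w', hw', ε', hε', hsub, η, hη, hfar⟩ := exists_sphericalCap_subset_of_ne hrank hw hε d
  refine ⟨w', hw', ε', hε', hsub, fun R _ => ?_⟩
  filter_upwards [Metric.tendsto_nhds.mp hd (η / 2) (half_pos hη),
    eventually_lt_norm_affineConformal_smul hlam hmax (one_div_pos.mpr hr) (half_pos hη) R]
    with k hdk hescape t ht v hv
  refine hescape t ht v hv.1 ?_
  rw [dist_eq_norm] at hdk
  linarith [hfar v hv, norm_sub_le_norm_sub_add_norm_sub v (zeroDirection (A k) (b k)) d]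

theorem reducesToVanishingHomotheties_of_tendsto (hlam : ∀ k, 0 < lam k)
    (hlam_zero : Tendsto lam atTop (𝓝 0)) {Binf : E ≃ₗᵢ[ℝ] E} {binf : E}
    (hB : Tendsto (fun k => (A k).symm.toLinearIsometry.toContinuousLinearMap) atTop
      (𝓝 Binf.toLinearIsometry.toContinuousLinearMap))
    (hb : Tendsto b atTop (𝓝 binf)) :
    ReducesToVanishingHomotheties (fun k => affineConformal (lam k) (A k) (b k)) := by
  have hBb : Tendsto (fun k => (A k).symm (b k)) atTop (𝓝 (Binf binf)) :=
    (isBoundedBilinearMap_apply.continuous.tendsto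
      (Binf.toLinearIsometry.toContinuousLinearMap, binf)).comp (hB.prodMk_nhds hb)
  exact ⟨fun _ => 1, fun k => (A k).symm, fun k => -(A k).symm (b k), 1, Binf, -Binf binf, lam,
    fun _ => one_pos, one_pos, tendsto_const_nhds, tendsto_iff_norm_sub_tendsto_zero.mp hB,
    hBb.neg, hlam, hlam_zero, fun k x => by simp [affineConformal]⟩

variable [FiniteDimensional ℝ E]

theorem exists_subseq_capConesEscape (hrank : 1 < Module.rank ℝ E) (hlam : ∀ k, 0 < lam k)
    (hmax : Tendsto (fun k => max (lam k) ‖b k‖) atTop atTop) :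
    ∃ φ : ℕ → ℕ, StrictMono φ ∧
      CapConesEscape (fun k => affineConformal (lam (φ k)) (A (φ k)) (b (φ k))) := by
  have : ProperSpace E := FiniteDimensional.proper ℝ E
  obtain ⟨d, -, φ, hφ, hd⟩ := tendsto_subseq_of_bounded
    (Metric.isBounded_closedBall (x := (0 : E)) (r := 1))
    (x := fun k => zeroDirection (A k) (b k)) fun k =>
      mem_closedBall_zero_iff.mpr (norm_normalize_le_one (-(A k).symm (b k)))
  exact ⟨φ, hφ, capConesEscape_of_tendsto_zeroDirection hrank (fun k => hlam (φ k))
    (hmax.comp hφ.tendsto_atTop) hd⟩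

theorem exists_subseq_tendsto_linearIsometryEquiv_and_vector {C : ℝ} (B : ℕ → E ≃ₗᵢ[ℝ] E)
    (hb : ∀ k, ‖b k‖ ≤ C) :
    ∃ (Binf : E ≃ₗᵢ[ℝ] E) (binf : E) (φ : ℕ → ℕ), StrictMono φ ∧
      Tendsto (fun k => (B (φ k)).toLinearIsometry.toContinuousLinearMap) atTop
        (𝓝 Binf.toLinearIsometry.toContinuousLinearMap) ∧
      Tendsto (fun k => b (φ k)) atTop (𝓝 binf) := by
  have : ProperSpace ((E →L[ℝ] E) × E) := FiniteDimensional.proper ℝ _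
  obtain ⟨⟨L, binf⟩, -, φ, hφ, hlim⟩ := tendsto_subseq_of_bounded
    (Metric.isBounded_closedBall.prod Metric.isBounded_closedBall)
    (x := fun k => ((B k).toLinearIsometry.toContinuousLinearMap, b k)) fun k =>
      Set.mk_mem_prod
        (mem_closedBall_zero_iff.mpr (B k).toLinearIsometry.norm_toContinuousLinearMap_le)
        (mem_closedBall_zero_iff.mpr (hb k))
  obtain ⟨hL, hbinf⟩ := Prod.tendsto_iff _ _ |>.mp hlim
  obtain ⟨Binf, rfl⟩ := exists_toContinuousLinearMap_eq_of_tendsto hL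
  exact ⟨Binf.toLinearIsometryEquiv rfl, binf, φ, hφ, hL, hbinf⟩

theorem exists_subseq_reducesToVanishingHomotheties (hlam : ∀ k, 0 < lam k)
    (hunbounded : Tendsto (fun k => max (max (lam k) (lam k)⁻¹) ‖b k‖) atTop atTop)
    (hmax : ¬ Tendsto (fun k => max (lam k) ‖b k‖) atTop atTop) :
    ∃ φ : ℕ → ℕ, StrictMono φ ∧
      ReducesToVanishingHomotheties
        (fun k => affineConformal (lam (φ k)) (A (φ k)) (b (φ k))) := by
  obtain ⟨C, hC⟩ := not_forall.mp (mt tendsto_atTop.mpr hmax)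
  obtain ⟨φ₁, hφ₁, hlt⟩ := extraction_of_frequently_atTop (not_eventually.mp hC)
  have hle (k : ℕ) : max (lam (φ₁ k)) ‖b (φ₁ k)‖ ≤ C := (not_le.mp (hlt k)).le
  have hlam_zero : Tendsto (fun k => lam (φ₁ k)) atTop (𝓝 0) :=
    tendsto_zero_of_tendsto_max_inv_of_eventually_le (hunbounded.comp hφ₁.tendsto_atTop)
      (.of_forall hle)
  obtain ⟨Binf, binf, φ₂, hφ₂, hB, hb⟩ := exists_subseq_tendsto_linearIsometryEquiv_and_vector
    (fun k => (A (φ₁ k)).symm) fun k => (le_max_right _ _).trans (hle k)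
  exact ⟨φ₁ ∘ φ₂, hφ₁.comp hφ₂, reducesToVanishingHomotheties_of_tendsto
    (fun k => hlam (φ₁ (φ₂ k))) (hlam_zero.comp hφ₂.tendsto_atTop) hB hb⟩

end Sequence

theorem unbounded_conformal_affine_dichotomy_general [FiniteDimensional ℝ E]
    (hrank : 1 < Module.rank ℝ E) (lam : ℕ → ℝ) (hlam : ∀ k, 0 < lam k)
    (A : ℕ → E ≃ₗᵢ[ℝ] E) (b : ℕ → E)
    (hunbounded : Tendsto (fun k => max (max (lam k) (lam k)⁻¹) ‖b k‖) atTop atTop) :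
    ∃ φ : ℕ → ℕ, StrictMono φ ∧
      (CapConesEscape (fun k => affineConformal (lam (φ k)) (A (φ k)) (b (φ k))) ∨
        ReducesToVanishingHomotheties
          (fun k => affineConformal (lam (φ k)) (A (φ k)) (b (φ k)))) := by
  by_cases hmax : Tendsto (fun k => max (lam k) ‖b k‖) atTop atTop
  · obtain ⟨φ, hφ, hescape⟩ := exists_subseq_capConesEscape hrank hlam hmax
    exact ⟨φ, hφ, .inl hescape⟩
  · obtain ⟨φ, hφ, hreduce⟩ := exists_subseq_reducesToVanishingHomotheties hlam hunbounded hmax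
    exact ⟨φ, hφ, .inr hreduce⟩

end NormedSpace

/-- dynamics of an unbounded sequence of affine conformal maps of ℝⁿ,
read through the conformal chart. Either (after extraction) truncated cones over
suitable spherical subcaps escape every compact set, or the sequence, corrected
by converging conformal maps, is a sequence of homotheties of ratios tending to 0. -/
theorem unbounded_conformal_affine_dichotomy
    (n : ℕ) (hn : 2 ≤ n)
    (lam : ℕ → ℝ) (hlam : ∀ k, 0 < lam k)
    (A : ℕ → (EuclideanSpace ℝ (Fin n) ≃ₗᵢ[ℝ] EuclideanSpace ℝ (Fin n)))
    (b : ℕ → EuclideanSpace ℝ (Fin n))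
    (hunbounded : Tendsto (fun k => max (max (lam k) (lam k)⁻¹) ‖b k‖) atTop atTop) :
    ∃ φ : ℕ → ℕ, StrictMono φ ∧
      ((∀ r > (0 : ℝ), ∀ w : EuclideanSpace ℝ (Fin n), ‖w‖ = 1 → ∀ ε > (0 : ℝ),
          ∃ w' : EuclideanSpace ℝ (Fin n), ‖w'‖ = 1 ∧ ∃ ε' > (0 : ℝ),
            ({v : EuclideanSpace ℝ (Fin n) | ‖v‖ = 1 ∧ ‖v - w'‖ ≤ ε'} ⊆
              {v : EuclideanSpace ℝ (Fin n) | ‖v‖ = 1 ∧ ‖v - w‖ ≤ ε}) ∧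
            ∀ R > (0 : ℝ), ∃ N : ℕ, ∀ k ≥ N, ∀ t : ℝ, 1 / r ≤ t →
              ∀ v : EuclideanSpace ℝ (Fin n), ‖v‖ = 1 → ‖v - w'‖ ≤ ε' →
                ‖lam (φ k) • (A (φ k) (t • v)) + b (φ k)‖ > R)
        ∨
       (∃ (m : ℕ → ℝ) (B : ℕ → (EuclideanSpace ℝ (Fin n) ≃ₗᵢ[ℝ] EuclideanSpace ℝ (Fin n)))
          (c : ℕ → EuclideanSpace ℝ (Fin n))
          (minf : ℝ) (Binf : EuclideanSpace ℝ (Fin n) ≃ₗᵢ[ℝ] EuclideanSpace ℝ (Fin n))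
          (cinf : EuclideanSpace ℝ (Fin n)) (s : ℕ → ℝ),
          (∀ k, 0 < m k) ∧ 0 < minf ∧ Tendsto m atTop (𝓝 minf) ∧
          Tendsto (fun k =>
              ‖((B k).toLinearIsometry.toContinuousLinearMap
                - Binf.toLinearIsometry.toContinuousLinearMap)‖) atTop (𝓝 0) ∧
          Tendsto c atTop (𝓝 cinf) ∧
          (∀ k, 0 < s k) ∧ Tendsto s atTop (𝓝 0) ∧
          (∀ k, ∀ x : EuclideanSpace ℝ (Fin n),
            m k • (B k (lam (φ k) • (A (φ k) x) + b (φ k))) + c k = s k • x))) := by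
  have hrank : 1 < Module.rank ℝ (EuclideanSpace ℝ (Fin n)) := by
    rw [← Module.finrank_eq_rank, finrank_euclideanSpace_fin]
    exact_mod_cast hn
  simpa only [CapConesEscape, ReducesToVanishingHomotheties, affineConformal, sphericalCap,
    Set.mem_ofPred_eq, and_imp, eventually_atTop]
    using unbounded_conformal_affine_dichotomy_general hrank lam hlam A b hunbounded
end

section
/- Let n ≥ 2. Let (λ_k) and (μ_k) be sequences of positive reals with μ_k → ∞ and λ_k/μ_k → 0, and let (u_k) be a sequence of unit vectors of ℝⁿ converging to a unit vector u_∞. Let K be a closed subset of the unit sphere Sⁿ⁻¹ with −u_∞ ∉ K, and let r > 0. Then for every R > 0 there exists N such that for all k ≥ N, all v ∈ K and all t ≥ 1/r one has ‖λ_k t • v + μ_k • u_k‖ > R; that is, the images of the truncated cone {t·v : t ≥ 1/r, v ∈ K} under the maps x ↦ λ_k • x + μ_k • u_k leave every compact subset of ℝⁿ. -/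
open Filter Topology

/-!
For `w` of the same norm as the vectors of `K`, the distance from `-w` to a ray `{s • v : s ≥ 0}`
with `v ∈ K` is at least half the distance from `-w` to `v`. So `-w ∉ closure K` already keeps `-w`
away from the whole cone over `K`. Since the cone is invariant under scaling, dividing by `μ_k`
turns `‖x + μ_k • u_k‖` into `μ_k` times the distance from `-u_k` to a point of the cone, and that
distance is eventually bounded below because `u_k → w`.
-/

section Cone

open scoped Pointwise

variable {ι E : Type*} [SeminormedAddCommGroup E] {l : Filter ι} {mu : ι → ℝ} {u : ι → E}
  {v w : E} {K C : Set E}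

theorem neg_notMem_closure_iff_exists_pos_le_norm_add :
    -w ∉ closure C ↔ ∃ ε > 0, ∀ x ∈ C, ε ≤ ‖x + w‖ := by
  simp only [Metric.mem_closure_iff, not_forall, not_exists, not_and, not_lt, dist_comm (-w),
    dist_eq_norm, sub_neg_eq_add, exists_prop]

variable [NormedSpace ℝ E]

theorem norm_add_le_two_mul_norm_smul_add (hvw : ‖v‖ = ‖w‖) {s : ℝ} (hs : 0 ≤ s) :
    ‖v + w‖ ≤ 2 * ‖s • v + w‖ := by
  have norm_sub_one_smul_le : ‖(s - 1) • v‖ ≤ ‖s • v + w‖ := calc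
    ‖(s - 1) • v‖ = |‖s • v‖ - ‖-w‖| := by
      rw [norm_smul, norm_smul_of_nonneg hs, norm_neg, ← hvw, ← sub_one_mul, abs_mul, abs_norm,
        Real.norm_eq_abs]
    _ ≤ ‖s • v - -w‖ := abs_norm_sub_norm_le _ _
    _ = ‖s • v + w‖ := by rw [sub_neg_eq_add]
  calc
    ‖v + w‖ = ‖(s • v + w) - (s - 1) • v‖ := by congr 1; module
    _ ≤ ‖s • v + w‖ + ‖(s - 1) • v‖ := norm_sub_le _ _
    _ ≤ 2 * ‖s • v + w‖ := by linarith

theorem neg_notMem_closure_Ici_smul (hK : K ⊆ Metric.sphere 0 ‖w‖) (hw : -w ∉ closure K) :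
    -w ∉ closure (Set.Ici (0 : ℝ) • K) := by
  obtain ⟨ε, hε, hεK⟩ := neg_notMem_closure_iff_exists_pos_le_norm_add.1 hw
  refine neg_notMem_closure_iff_exists_pos_le_norm_add.2 ⟨ε / 2, half_pos hε, ?_⟩
  rintro _ ⟨s, hs, v, hv, rfl⟩
  have hvw : ‖v‖ = ‖w‖ := mem_sphere_zero_iff_norm.1 (hK hv)
  linarith [hεK v hv, norm_add_le_two_mul_norm_smul_add hvw hs]

theorem eventually_forall_lt_norm_add_smul (hC : ∀ a : ℝ, 0 < a → ∀ x ∈ C, a • x ∈ C)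
    (hw : -w ∉ closure C) (hmu : Tendsto mu l atTop) (hu : Tendsto u l (𝓝 w)) (R : ℝ) :
    ∀ᶠ k in l, ∀ x ∈ C, R < ‖x + mu k • u k‖ := by
  obtain ⟨ε, hε, hεC⟩ := neg_notMem_closure_iff_exists_pos_le_norm_add.1 hw
  filter_upwards [hmu.eventually_gt_atTop 0, hmu.eventually_gt_atTop (R / (ε / 2)),
    Metric.tendsto_nhds.1 hu (ε / 2) (half_pos hε)] with k hpos hlarge hclose x hx
  have rescaled_far : ε / 2 ≤ ‖(mu k)⁻¹ • x + u k‖ := by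
    have far_from_limit := hεC _ (hC _ (inv_pos.2 hpos) x hx)
    have triangle := norm_sub_le ((mu k)⁻¹ • x + u k) (u k - w)
    rw [add_sub_assoc, sub_sub_cancel] at triangle
    rw [dist_eq_norm] at hclose
    linarith
  calc
    R < mu k * (ε / 2) := (div_lt_iff₀ (half_pos hε)).1 hlarge
    _ ≤ mu k * ‖(mu k)⁻¹ • x + u k‖ := by gcongr
    _ = ‖x + mu k • u k‖ := by
      rw [← norm_smul_of_nonneg hpos.le, smul_add, smul_inv_smul₀ hpos.ne']

theorem cone_escape_of_ratio_to_zero_general (hmu : Tendsto mu l atTop) (hu : Tendsto u l (𝓝 w))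
    (hK : K ⊆ Metric.sphere 0 ‖w‖) (hw : -w ∉ closure K) (R : ℝ) :
    ∀ᶠ k in l, ∀ v ∈ K, ∀ s : ℝ, 0 ≤ s → R < ‖s • v + mu k • u k‖ := by
  have smul_mem_cone (a : ℝ) (ha : 0 < a) :
      ∀ x ∈ Set.Ici (0 : ℝ) • K, a • x ∈ Set.Ici (0 : ℝ) • K := by
    rintro _ ⟨s, hs, v, hv, rfl⟩
    exact ⟨a * s, mul_nonneg ha.le hs, v, hv, mul_smul a s v⟩
  filter_upwards [eventually_forall_lt_norm_add_smul smul_mem_cone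
    (neg_notMem_closure_Ici_smul hK hw) hmu hu R] with k hk v hv s hs
  exact hk _ (Set.smul_mem_smul hs hv)

end Cone

/-- images of truncated cones under `x ↦ λ_k • x + μ_k • u_k` leave
every compact subset of ℝⁿ, when `μ_k → ∞` and `λ_k/μ_k → 0`. -/
theorem cone_escape_of_ratio_to_zero
    (n : ℕ) (hn : 2 ≤ n)
    (lam mu : ℕ → ℝ) (hlam : ∀ k, 0 < lam k) (hmu : ∀ k, 0 < mu k)
    (hmu_top : Tendsto mu atTop atTop)
    (hratio : Tendsto (fun k => lam k / mu k) atTop (𝓝 0))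
    (u : ℕ → EuclideanSpace ℝ (Fin n)) (hu : ∀ k, ‖u k‖ = 1)
    (uinf : EuclideanSpace ℝ (Fin n)) (huinf : ‖uinf‖ = 1)
    (hu_lim : Tendsto u atTop (𝓝 uinf))
    (K : Set (EuclideanSpace ℝ (Fin n)))
    (hK_sub : K ⊆ Metric.sphere (0 : EuclideanSpace ℝ (Fin n)) 1)
    (hK_closed : IsClosed K)
    (hK_not : -uinf ∉ K)
    (r : ℝ) (hr : 0 < r) :
    ∀ R > 0, ∃ N : ℕ, ∀ k ≥ N, ∀ v ∈ K, ∀ t : ℝ, 1 / r ≤ t →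
      ‖(lam k * t) • v + mu k • u k‖ > R := by
  intro R _
  obtain ⟨N, hN⟩ := eventually_atTop.1 <| cone_escape_of_ratio_to_zero_general hmu_top hu_lim
    (huinf.symm ▸ hK_sub) (hK_closed.closure_eq.symm ▸ hK_not) R
  exact ⟨N, fun k hk v hv t ht ↦
    hN k hk v hv _ (mul_nonneg (hlam k).le ((one_div_pos.2 hr).le.trans ht))⟩
end

section
/- Let n ≥ 2, let E be a closed subset of ℝⁿ with μH[n−1](E) = 0, and let λ > 0. Then the set 𝒰 = {w ∈ Sⁿ⁻¹ : t • w ∉ E for all t ∈ (0, λ]} is a dense G_δ subset of the unit sphere Sⁿ⁻¹: it contains a countable intersection of subsets that are open and dense in Sⁿ⁻¹ (in particular it is dense in Sⁿ⁻¹, and it is a G_δ set of Sⁿ⁻¹). -/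
/-!
Fix a vector `w ≠ 0` and a functional `f` with `f w = 1`. The central projection `x ↦ (f x)⁻¹ • x`
onto the affine hyperplane `f = 1` is smooth where `f ≠ 0`, so it maps the thin set `E` to a null
set of that hyperplane. Hence there are points of the hyperplane arbitrarily close to `w` outside
this image, and the line through the origin and such a point meets `E` at most at the origin. This
gives density without Baire's theorem. A σ-compact set of radii turns the avoidance condition into
countably many open ones, each of which is dense because it contains the dense set.
-/

open Filter Topology MeasureTheory
open scoped MeasureTheory

section Topology

variable {X Y : Type*} [TopologicalSpace X] [TopologicalSpace Y]

lemma isSigmaCompact_of_isLocallyClosed [LocallyCompactSpace X] [SecondCountableTopology X]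
    {s : Set X} (hs : IsLocallyClosed s) : IsSigmaCompact s := by
  have : LocallyCompactSpace s := hs.locallyCompactSpace
  exact isSigmaCompact_iff_sigmaCompactSpace.2 inferInstance

lemma isOpen_setOf_forall_mem_of_isCompact {K : Set Y} (hK : IsCompact K) {U : Set (X × Y)}
    (hU : IsOpen U) : IsOpen {x | ∀ y ∈ K, (x, y) ∈ U} :=
  isOpen_iff_eventually.2 fun _ hx ↦
    hK.eventually_forall_of_forall_eventually fun y hy ↦ hU.mem_nhds (hx y hy)

lemma isGδ_setOf_forall_mem_of_isSigmaCompact {K : Set Y} (hK : IsSigmaCompact K)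
    {U : Set (X × Y)} (hU : IsGδ U) : IsGδ {x | ∀ y ∈ K, (x, y) ∈ U} := by
  obtain ⟨C, hC, rfl⟩ := hK
  obtain ⟨V, hV, rfl⟩ := hU.eq_iInter_nat
  have h_eq : {x | ∀ y ∈ ⋃ i, C i, (x, y) ∈ ⋂ j, V j} =
      ⋂ i, ⋂ j, {x | ∀ y ∈ C i, (x, y) ∈ V j} := by
    ext x
    simp only [Set.mem_ofPred_eq, Set.mem_iUnion, Set.mem_iInter, forall_exists_index]
    exact ⟨fun h i j y hy ↦ h y i hy j, fun h y i hy j ↦ h i j y hy⟩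
  rw [h_eq]
  exact .iInter fun i ↦ .iInter_of_isOpen fun j ↦
    isOpen_setOf_forall_mem_of_isCompact (hC i) (hV j)

lemma exists_isOpen_dense_iInter_eq {s : Set X} (hs : IsGδ s) (hd : Dense s) :
    ∃ U : ℕ → Set X, (∀ m, IsOpen (U m) ∧ Dense (U m)) ∧ ⋂ m, U m = s := by
  obtain ⟨U, hU, rfl⟩ := hs.eq_iInter_nat
  exact ⟨U, fun m ↦ ⟨hU m, hd.mono (Set.iInter_subset U m)⟩, rfl⟩

end Topology

lemma hausdorffMeasure_image_eq_zero_of_locally_lipschitzOn {X Y : Type*}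
    [EMetricSpace X] [SecondCountableTopology X] [MeasurableSpace X] [BorelSpace X]
    [EMetricSpace Y] [MeasurableSpace Y] [BorelSpace Y] {d : ℝ} (hd : 0 ≤ d)
    {f : X → Y} {s : Set X} (hf : ∀ x ∈ s, ∃ C, ∃ t ∈ 𝓝[s] x, LipschitzOnWith C f t)
    (hs : μH[d] s = 0) : μH[d] (f '' s) = 0 := by
  choose! C t ht hft using hf
  obtain ⟨u, hus, hu, hsu⟩ := TopologicalSpace.countable_cover_nhdsWithin ht
  have h_pieces : f '' s ⊆ ⋃ x ∈ u, f '' (s ∩ t x) := by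
    rw [← Set.image_iUnion₂, ← Set.inter_iUnion₂, Set.inter_eq_left.2 hsu]
  refine measure_mono_null h_pieces ((measure_biUnion_null_iff hu).2 fun x hx ↦ ?_)
  refine le_antisymm ?_ zero_le
  calc μH[d] (f '' (s ∩ t x))
      ≤ (C x : ENNReal) ^ d * μH[d] (s ∩ t x) :=
        ((hft x (hus hx)).mono Set.inter_subset_right).hausdorffMeasure_image_le hd
    _ = 0 := by rw [measure_inter_null_of_null_left _ hs, mul_zero]

section NormedSpace

variable {F : Type*} [NormedAddCommGroup F] [NormedSpace ℝ F]

lemma dense_compl_of_hausdorffMeasure_finrank_eq_zero [FiniteDimensional ℝ F] [MeasurableSpace F]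
    [BorelSpace F] {s : Set F} (hs : μH[Module.finrank ℝ F] s = 0) : Dense sᶜ :=
  Measure.dense_of_ae (measure_eq_zero_iff_ae_notMem.1 hs)

/-- The central projection from the origin onto the affine hyperplane `f = 1`. It is undefined on
the hyperplane `f = 0`, where the formula returns `0`. -/
noncomputable def centralProjection (f : StrongDual ℝ F) (x : F) : F := (f x)⁻¹ • x

lemma centralProjection_smul (f : StrongDual ℝ F) {t : ℝ} (ht : t ≠ 0) (x : F) :
    centralProjection f (t • x) = centralProjection f x := by
  simp [centralProjection, smul_smul, ht]

lemma centralProjection_eq_self {f : StrongDual ℝ F} {x : F} (hx : f x = 1) :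
    centralProjection f x = x := by
  simp [centralProjection, hx]

lemma contDiffAt_centralProjection {n : WithTop ℕ∞} {f : StrongDual ℝ F} {x : F} (hx : f x ≠ 0) :
    ContDiffAt ℝ n (centralProjection f) x :=
  (f.contDiff.contDiffAt.inv hx).smul contDiffAt_id

lemma hausdorffMeasure_image_centralProjection_eq_zero [SecondCountableTopology F]
    [MeasurableSpace F] [BorelSpace F] (f : StrongDual ℝ F) {d : ℝ} (hd : 0 ≤ d) {E : Set F}
    (hE : μH[d] E = 0) : μH[d] (centralProjection f '' (E ∩ {x | f x ≠ 0})) = 0 := by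
  refine hausdorffMeasure_image_eq_zero_of_locally_lipschitzOn hd (fun x hx ↦ ?_)
    (measure_inter_null_of_null_left _ hE)
  obtain ⟨C, t, ht, hC⟩ := (contDiffAt_centralProjection hx.2).exists_lipschitzOnWith
  exact ⟨C, t, mem_nhdsWithin_of_mem_nhds ht, hC⟩

lemma dense_preimage_sphere_of_smul_mem {D : Set F} (hD : Dense D)
    (hD_smul : ∀ x ∈ D, ∀ c : ℝ, 0 < c → c • x ∈ D) :
    Dense {w : Metric.sphere (0 : F) 1 | (w : F) ∈ D} := by
  rw [Subtype.dense_iff]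
  intro w hw
  have hw0 : w ≠ 0 := ne_zero_of_mem_unit_sphere ⟨w, hw⟩
  have h_cont : ContinuousAt NormedSpace.normalize w :=
    (continuousAt_id.norm.inv₀ (norm_ne_zero_iff.2 hw0)).smul continuousAt_id
  have hw_cl : w ∈ closure ({0}ᶜ ∩ D) :=
    hD.open_subset_closure_inter isOpen_compl_singleton hw0
  rw [← NormedSpace.normalize_eq_self_of_norm_eq_one (mem_sphere_zero_iff_norm.1 hw)]
  refine h_cont.continuousWithinAt.mem_closure hw_cl fun x hx ↦ ?_
  have hx_norm : ‖NormedSpace.normalize x‖ = 1 := NormedSpace.norm_normalize_eq_one_iff.2 hx.1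
  exact ⟨⟨_, mem_sphere_zero_iff_norm.2 hx_norm⟩,
    hD_smul x hx.2 _ (inv_pos.2 (norm_pos_iff.2 hx.1)), rfl⟩

variable [MeasurableSpace F] [BorelSpace F] {d : ℕ} {E : Set F}

lemma dense_setOf_ker_add_notMem (hd : Module.finrank ℝ F = d + 1) {f : StrongDual ℝ F}
    (hf : f ≠ 0) (hE : μH[d] E = 0) (w : F) : Dense {y : f.ker | w + (y : F) ∉ E} := by
  have : FiniteDimensional ℝ F := .of_finrank_eq_succ hd
  have h_finrank : Module.finrank ℝ f.ker = d := by
    have hf' : f.toLinearMap ≠ 0 := fun h ↦ hf (ContinuousLinearMap.coe_injective h)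
    exact Nat.add_right_cancel ((Module.Dual.finrank_ker_add_one_of_ne_zero hf').trans hd)
  have h_isom : Isometry fun y : f.ker ↦ w + (y : F) :=
    (isometry_add_left w).comp isometry_subtype_coe
  have h_null : μH[Module.finrank ℝ f.ker] ((fun y : f.ker ↦ w + (y : F)) ⁻¹' E) = 0 := by
    rw [h_finrank, h_isom.hausdorffMeasure_preimage (.inl d.cast_nonneg)]
    exact measure_inter_null_of_null_left _ hE
  exact dense_compl_of_hausdorffMeasure_finrank_eq_zero h_null

lemma mem_closure_setOf_line_avoiding (hd : Module.finrank ℝ F = d + 1) (hE : μH[d] E = 0)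
    {w : F} (hw : w ≠ 0) : w ∈ closure {x | ∀ t : ℝ, t ≠ 0 → t • x ∉ E} := by
  have : FiniteDimensional ℝ F := .of_finrank_eq_succ hd
  obtain ⟨f, hfw⟩ := SeparatingDual.exists_eq_one (R := ℝ) hw
  have hf : f ≠ 0 := by rintro rfl; simp at hfw
  have h_dense : Dense {y : f.ker | w + (y : F) ∉ centralProjection f '' (E ∩ {x | f x ≠ 0})} :=
    dense_setOf_ker_add_notMem hd hf
      (hausdorffMeasure_image_centralProjection_eq_zero f d.cast_nonneg hE) w
  have h_cont : Continuous fun y : f.ker ↦ w + (y : F) := by fun_prop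
  have h_zero : w + ((0 : f.ker) : F) = w := add_zero w
  rw [← h_zero]
  refine h_cont.continuousAt.continuousWithinAt.mem_closure (h_dense 0) fun y hy t ht htE ↦ hy ?_
  have hfy : f (w + y) = 1 := by
    have hy_ker : f y = 0 := y.2
    rw [map_add, hfw, hy_ker, add_zero]
  have hft : f (t • (w + (y : F))) ≠ 0 := by rwa [map_smul, hfy, smul_eq_mul, mul_one]
  refine ⟨t • (w + y), ⟨htE, hft⟩, ?_⟩
  rw [centralProjection_smul f ht, centralProjection_eq_self hfy]

lemma dense_setOf_line_avoiding (hd : Module.finrank ℝ F = d + 1) (hE : μH[d] E = 0) :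
    Dense {x : F | ∀ t : ℝ, t ≠ 0 → t • x ∉ E} := by
  have : Nontrivial F := Module.nontrivial_of_finrank_eq_succ hd
  exact dense_closure.1 <|
    (dense_compl_singleton 0).mono fun _ ↦ mem_closure_setOf_line_avoiding hd hE

lemma dense_setOf_direction_avoiding (hd : Module.finrank ℝ F = d + 1) (hE : μH[d] E = 0)
    {T : Set ℝ} (hT : 0 ∉ T) :
    Dense {w : Metric.sphere (0 : F) 1 | ∀ t ∈ T, t • (w : F) ∉ E} := by
  refine (dense_preimage_sphere_of_smul_mem (dense_setOf_line_avoiding hd hE) ?_).mono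
    fun _ (hw : ∀ t : ℝ, t ≠ 0 → _) t ht ↦ hw t (ne_of_mem_of_not_mem ht hT)
  intro x hx c hc t ht
  rw [smul_smul]
  exact hx (t * c) (mul_ne_zero ht hc.ne')

theorem directions_avoiding_thin_set_dense_Gdelta_general (hd : Module.finrank ℝ F = d + 1)
    (hE_Gδ : IsGδ Eᶜ) (hE_null : μH[d] E = 0) {T : Set ℝ} (hT : IsSigmaCompact T) (hT0 : 0 ∉ T) :
    let 𝒰 : Set (Metric.sphere (0 : F) 1) := {w | ∀ t ∈ T, t • (w : F) ∉ E}
    (∃ s : ℕ → Set (Metric.sphere (0 : F) 1),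
      (∀ m, IsOpen (s m) ∧ Dense (s m)) ∧ (⋂ m, s m) ⊆ 𝒰) ∧ Dense 𝒰 ∧ IsGδ 𝒰 := by
  intro 𝒰
  have h_cont : Continuous fun p : Metric.sphere (0 : F) 1 × ℝ ↦ p.2 • (p.1 : F) := by fun_prop
  have h_Gδ : IsGδ 𝒰 := isGδ_setOf_forall_mem_of_isSigmaCompact hT (hE_Gδ.preimage h_cont)
  have h_dense : Dense 𝒰 := dense_setOf_direction_avoiding hd hE_null hT0
  obtain ⟨s, hs, hs_eq⟩ := exists_isOpen_dense_iInter_eq h_Gδ h_dense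
  exact ⟨⟨s, hs, hs_eq.subset⟩, h_dense, h_Gδ⟩

end NormedSpace

/-- the set of directions `w` on the unit sphere whose radial segment
`(0, λ]·w` avoids a closed set `E` with `μH[n-1](E) = 0` is a dense `G_δ` subset
of the sphere. -/
theorem directions_avoiding_thin_set_dense_Gdelta
    (n : ℕ) (hn : 2 ≤ n)
    (E : Set (EuclideanSpace ℝ (Fin n)))
    (hE_closed : IsClosed E)
    (hE_null : μH[(n : ℝ) - 1] E = 0)
    (lam : ℝ) (hlam : 0 < lam) :
    let S := Metric.sphere (0 : EuclideanSpace ℝ (Fin n)) 1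
    let 𝒰 : Set S := {w : S | ∀ t : ℝ, 0 < t → t ≤ lam → t • (w : EuclideanSpace ℝ (Fin n)) ∉ E}
    (∃ s : ℕ → Set S, (∀ m, IsOpen (s m) ∧ Dense (s m)) ∧ (⋂ m, s m) ⊆ 𝒰) ∧
      Dense 𝒰 ∧ IsGδ 𝒰 := by
  obtain ⟨d, rfl⟩ := Nat.exists_eq_add_of_le' (one_le_two.trans hn)
  simpa only [Set.mem_Ioc, and_imp] using
    directions_avoiding_thin_set_dense_Gdelta_general (finrank_euclideanSpace_fin (𝕜 := ℝ))
      hE_closed.isOpen_compl.isGδ (by simpa using hE_null)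
      (isSigmaCompact_of_isLocallyClosed isLocallyClosed_Ioc)
      (Set.left_notMem_Ioc (a := (0 : ℝ)) (b := lam))
end

section
/- Let n ≥ 2, let U be a nonempty connected open subset of ℝⁿ, and let E ⊆ U be relatively closed in U with μH[n−1](E) = 0. Then U ∖ E is dense in U and connected. -/
open Filter Topology MeasureTheory
open scoped MeasureTheory

/-!
In an `n`-dimensional space, a set `s` of vanishing `(n - 1)`-dimensional measure has a null image
in the quotient by any line, so a dense set of translates of that line misses `s`. If an open convex
set `B` contains `x` and `y`, and `B \ s` is covered by open sets `u ∋ x` and `v ∋ y`, a slight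
translate of the segment from `x` to `y` therefore runs inside `B \ s` from `u` to `v`, and must
meet `u ∩ v`. Density of the complement of `s` glues such convex pieces of a connected open set
together.
-/

section Topology

variable {X : Type*} [TopologicalSpace X] {U s : Set X}

theorem isPreconnected_sdiff_of_dense_compl_of_locally (hU : IsPreconnected U) (hs : Dense sᶜ)
    (hloc : ∀ x ∈ U, ∃ N ∈ 𝓝 x, N ⊆ U ∧ IsPreconnected (N \ s)) :
    IsPreconnected (U \ s) := by
  have hUo : IsOpen U := isOpen_iff_mem_nhds.2 fun x hx ↦
    let ⟨_, hN, hNU, _⟩ := hloc x hx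
    mem_of_superset hN hNU
  intro u v hu hv huv hUu hUv
  by_contra hdisj
  have hcover : U ⊆ interior (s ∪ u) ∪ interior (s ∪ v) := by
    intro x hx
    obtain ⟨N, hN, hNU, hNconn⟩ := hloc x hx
    have hNUs : N \ s ⊆ U \ s := Set.sdiff_subset_sdiff_left hNU
    have hNdisj : (N \ s) ∩ (u ∩ v) = ∅ := Set.not_nonempty_iff_eq_empty.1 fun h ↦
      hdisj (h.mono (Set.inter_subset_inter_left _ hNUs))
    have hmem {w : Set X} (h : N \ s ⊆ w) : x ∈ interior (s ∪ w) :=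
      mem_interior_iff_mem_nhds.2 (mem_of_superset hN (Set.sdiff_subset_iff.1 h))
    exact (isPreconnected_iff_subset_of_disjoint.1 hNconn u v hu hv (hNUs.trans huv) hNdisj).imp
      hmem hmem
  have hmeets {w : Set X} (hw : IsOpen w) (h : ((U \ s) ∩ w).Nonempty) :
      (U ∩ interior (s ∪ w)).Nonempty :=
    h.mono (Set.inter_subset_inter Set.sdiff_subset (interior_maximal Set.subset_union_right hw))
  obtain ⟨z, ⟨hzU, hzu, hzv⟩, hzs⟩ := hs.inter_open_nonempty _
    (hUo.inter (isOpen_interior.inter isOpen_interior))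
    (hU _ _ isOpen_interior isOpen_interior hcover (hmeets hu hUu) (hmeets hv hUv))
  exact hdisj ⟨z, ⟨hzU, hzs⟩, (interior_subset hzu).resolve_left hzs,
    (interior_subset hzv).resolve_left hzs⟩

end Topology

section Lines

variable {V : Type*} [AddCommGroup V] [Module ℝ V] [TopologicalSpace V] {B U s : Set V}

theorem dense_compl_of_dense_line_disjoint (hs : ∀ v : V, Dense {x | ∀ t : ℝ, x + t • v ∉ s}) :
    Dense sᶜ := by
  simpa [Set.compl_def] using hs 0

variable [IsTopologicalAddGroup V] [ContinuousSMul ℝ V]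

theorem isPreconnected_sdiff_of_convex_of_dense_line_disjoint (hB : Convex ℝ B) (hBo : IsOpen B)
    (hs : ∀ v : V, Dense {x | ∀ t : ℝ, x + t • v ∉ s}) : IsPreconnected (B \ s) := by
  rintro u v hu hv huv ⟨x, hxB, hxu⟩ ⟨y, hyB, hyv⟩
  have hopen : IsOpen ((B ∩ u) ∩ (· + (y - x)) ⁻¹' (B ∩ v)) :=
    (hBo.inter hu).inter ((hBo.inter hv).preimage (continuous_add_const _))
  obtain ⟨z, ⟨⟨hzB, hzu⟩, hzyB, hzyv⟩, hz⟩ := (hs (y - x)).inter_open_nonempty _ hopen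
    ⟨x, ⟨hxB.1, hxu⟩, by simpa using ⟨hyB.1, hyv⟩⟩
  have hseg : segment ℝ z (z + (y - x)) ⊆ B \ s := by
    refine Set.subset_sdiff.2 ⟨hB.segment_subset hzB hzyB, Set.disjoint_left.2 ?_⟩
    rw [segment_eq_image']
    rintro _ ⟨t, -, rfl⟩
    simpa using hz t
  exact ((convex_segment _ _).isPreconnected u v hu hv (hseg.trans huv)
    ⟨z, left_mem_segment ℝ _ _, hzu⟩ ⟨_, right_mem_segment ℝ _ _, hzyv⟩).mono
    (Set.inter_subset_inter_left _ hseg)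

theorem isPreconnected_sdiff_of_dense_line_disjoint [LocallyConvexSpace ℝ V]
    (hU : IsPreconnected U) (hUo : IsOpen U)
    (hs : ∀ v : V, Dense {x | ∀ t : ℝ, x + t • v ∉ s}) : IsPreconnected (U \ s) := by
  refine isPreconnected_sdiff_of_dense_compl_of_locally hU
    (dense_compl_of_dense_line_disjoint hs) fun x hx ↦ ?_
  obtain ⟨N, ⟨hN, hNconv⟩, hNU⟩ :=
    (LocallyConvexSpace.convex_basis (𝕜 := ℝ) x).mem_iff.1 (hUo.mem_nhds hx)
  exact ⟨interior N, interior_mem_nhds.2 hN, interior_subset.trans hNU,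
    isPreconnected_sdiff_of_convex_of_dense_line_disjoint hNconv.interior isOpen_interior hs⟩

end Lines

section Hausdorff

theorem dense_compl_image_of_hausdorffMeasure_eq_zero {X F : Type*} [EMetricSpace X]
    [MeasurableSpace X] [BorelSpace X] [NormedAddCommGroup F] [NormedSpace ℝ F]
    [FiniteDimensional ℝ F] {K : NNReal} {f : X → F} {s : Set X} (hf : LipschitzWith K f)
    (hs : μH[Module.finrank ℝ F] s = 0) : Dense (f '' s)ᶜ := by
  borelize F
  have himage : μH[(Module.finrank ℝ F : ℝ)] (f '' s) = 0 := by
    simpa [hs] using hf.hausdorffMeasure_image_le (Nat.cast_nonneg (Module.finrank ℝ F)) s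
  exact interior_eq_empty_iff_dense_compl.1 (Measure.interior_eq_empty_of_null himage)

variable {V : Type*} [NormedAddCommGroup V] [NormedSpace ℝ V] [MeasurableSpace V] [BorelSpace V]
  {s : Set V}

theorem dense_setOf_translate_disjoint (W : Submodule ℝ V) [IsClosed (W : Set V)]
    [FiniteDimensional ℝ (V ⧸ W)] (hs : μH[Module.finrank ℝ (V ⧸ W)] s = 0) :
    Dense {x | ∀ w ∈ W, x + w ∉ s} := by
  have hdense : Dense (W.mkQL ⁻¹' (W.mkQL '' s)ᶜ) :=
    (dense_compl_image_of_hausdorffMeasure_eq_zero W.mkQL.lipschitz hs).preimage W.isOpenMap_mkQ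
  refine hdense.mono ?_
  intro x hx w hw hxw
  exact hx ⟨x + w, hxw, by simpa using hw⟩

theorem dense_setOf_line_disjoint [FiniteDimensional ℝ V]
    (hs : μH[(Module.finrank ℝ V : ℝ) - 1] s = 0) (v : V) :
    Dense {x | ∀ t : ℝ, x + t • v ∉ s} := by
  have hrank : (Module.finrank ℝ V : ℝ) - 1 ≤ Module.finrank ℝ (V ⧸ ℝ ∙ v) := by
    have hspan : Module.finrank ℝ (ℝ ∙ v) ≤ 1 := by
      simpa using finrank_span_le_card (R := ℝ) {v}
    have hquot := Submodule.finrank_quotient_add_finrank (ℝ ∙ v)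
    rw [sub_le_iff_le_add]
    exact_mod_cast (by lia : Module.finrank ℝ V ≤ Module.finrank ℝ (V ⧸ ℝ ∙ v) + 1)
  have hnull : μH[Module.finrank ℝ (V ⧸ ℝ ∙ v)] s = 0 :=
    le_antisymm ((Measure.hausdorffMeasure_mono hrank s).trans_eq hs) zero_le
  have : IsClosed ((ℝ ∙ v : Submodule ℝ V) : Set V) := Submodule.closed_of_finiteDimensional _
  simpa [Submodule.mem_span_singleton] using dense_setOf_translate_disjoint (ℝ ∙ v) hnull

end Hausdorff

theorem complement_of_thin_set_dense_connected_general {V : Type*} [NormedAddCommGroup V]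
    [NormedSpace ℝ V] [FiniteDimensional ℝ V] [MeasurableSpace V] [BorelSpace V] {U E : Set V}
    (hU_open : IsOpen U) (hU_conn : IsConnected U)
    (hE_null : μH[(Module.finrank ℝ V : ℝ) - 1] E = 0) :
    U ⊆ closure (U \ E) ∧ IsConnected (U \ E) := by
  have hlines : ∀ v : V, Dense {x | ∀ t : ℝ, x + t • v ∉ E} := dense_setOf_line_disjoint hE_null
  have hdense : U ⊆ closure (U \ E) :=
    (dense_compl_of_dense_line_disjoint hlines).open_subset_closure_inter hU_open
  exact ⟨hdense, closure_nonempty_iff.1 (hU_conn.nonempty.mono hdense),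
    isPreconnected_sdiff_of_dense_line_disjoint hU_conn.isPreconnected hU_open hlines⟩

/-- removing a relatively closed set of `(n-1)`-dimensional Hausdorff
measure zero from a nonempty connected open subset of ℝⁿ leaves a dense connected set. -/
theorem complement_of_thin_set_dense_connected
    (n : ℕ) (hn : 2 ≤ n)
    (U : Set (EuclideanSpace ℝ (Fin n)))
    (hU_ne : U.Nonempty) (hU_open : IsOpen U) (hU_conn : IsConnected U)
    (E : Set (EuclideanSpace ℝ (Fin n)))
    (hE_sub : E ⊆ U)
    (hE_closed : ∃ C : Set (EuclideanSpace ℝ (Fin n)), IsClosed C ∧ E = C ∩ U)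
    (hE_null : μH[(n : ℝ) - 1] E = 0) :
    U ⊆ closure (U \ E) ∧ IsConnected (U \ E) := by
  exact complement_of_thin_set_dense_connected_general hU_open hU_conn (by simpa using hE_null)
end

section
/- Let n ≥ 3, let U be a nonempty open subset of ℝⁿ which is simply connected as a topological subspace, and let E ⊆ U be relatively closed in U with μH[n−2](E) = 0. Then the subspace U ∖ E is simply connected. -/
open Filter Topology MeasureTheory
open scoped MeasureTheory

/-! Let `g` be a locally Lipschitz map from a `k`-dimensional to an `n`-dimensional space. The
vectors `v` for which `g + v`, restricted to a bounded set, meets a given set of diameter `r` form a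
set of measure `O(r ^ (n - k))`. Hence if `E` has `(n - k)`-dimensional Hausdorff measure zero,
almost every translate of `g` misses `E` altogether. Approximating a continuous map by a smooth one
and interpolating between the two by a cutoff function, one can therefore push any compact
`k`-parameter family off `E` by a small perturbation that is fixed on a closed set where the family
already avoids `E`. For `k = 1` this moves paths, and for `k = 2` homotopies of loops, from `U` into
`U \ E`. -/

open Metric Module Set
open scoped ENNReal NNReal Pointwise unitInterval

lemma mul_measure_le_mul_measure_univ_of_fibers {α β : Type*} [MeasurableSpace α]
    [MeasurableSpace β] {μ : Measure α} {ν : Measure β} [SFinite μ] [SFinite ν] {A : Set (α × β)}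
    {T : Set β} {c C : ℝ≥0∞} (hA : MeasurableSet A)
    (hT : ∀ b ∈ T, c ≤ μ ((·, b) ⁻¹' A)) (hC : ∀ a, ν (Prod.mk a ⁻¹' A) ≤ C) :
    c * ν T ≤ C * μ univ :=
  calc c * ν T ≤ c * ν {b | c ≤ μ ((·, b) ⁻¹' A)} := by gcongr; exact hT
    _ ≤ ∫⁻ b, μ ((·, b) ⁻¹' A) ∂ν :=
      mul_meas_ge_le_lintegral (measurable_measure_prodMk_right hA) c
    _ = ∫⁻ a, ν (Prod.mk a ⁻¹' A) ∂μ := by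
      rw [← Measure.prod_apply_symm hA, Measure.prod_apply hA]
    _ ≤ ∫⁻ _, C ∂μ := lintegral_mono hC
    _ = C * μ univ := lintegral_const C

/-- The outer measure `s ↦ μ (s - K)`, which measures the set of those translations moving some
point of `K` into `s`. It compares Lebesgue-null sets of translations with Hausdorff-null sets `s`
of obstacles. -/
def subOuterMeasure {G : Type*} [AddGroup G] [MeasurableSpace G] (μ : Measure G) (K : Set G) :
    OuterMeasure G where
  measureOf s := μ (s - K)
  empty := by simp only [empty_sub, measure_empty]
  mono h := measure_mono (sub_subset_sub_right h)
  iUnion_nat s _ := by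
    rw [iUnion_sub]
    exact measure_iUnion_le _

lemma outerMeasure_eq_zero_of_hausdorffMeasure_eq_zero {X : Type*} [EMetricSpace X]
    [MeasurableSpace X] [BorelSpace X] {m : OuterMeasure X} {d : ℝ} {C ε : ℝ≥0∞} (hC : C ≠ ∞)
    (hε : 0 < ε) (hm : ∀ s, ediam s ≤ ε → m s ≤ C * ediam s ^ d) {s : Set X} (hs : μH[d] s = 0) :
    m s = 0 := by
  have hC' : C + 1 ≠ ∞ := ENNReal.add_ne_top.2 ⟨hC, ENNReal.one_ne_top⟩
  have hle : m ≤ (C + 1) • OuterMeasure.mkMetric fun r : ℝ≥0∞ ↦ r ^ d := by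
    rw [← OuterMeasure.mkMetric_smul _ hC' (by simp)]
    refine OuterMeasure.le_mkMetric _ m ε hε fun t ht ↦ (hm t ht).trans ?_
    simp only [Pi.smul_apply, smul_eq_mul]
    gcongr
    exact le_self_add
  have hs' : OuterMeasure.mkMetric (fun r : ℝ≥0∞ ↦ r ^ d) s = 0 := by
    rw [OuterMeasure.coe_mkMetric]
    exact hs
  simpa [hs'] using hle s

section FiniteDimensional

variable {V W : Type*} [NormedAddCommGroup V] [NormedSpace ℝ V] [FiniteDimensional ℝ V]
  [MeasurableSpace V] [BorelSpace V] [NormedAddCommGroup W] [NormedSpace ℝ W]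
  [FiniteDimensional ℝ W]

section Translates

variable [MeasurableSpace W] [BorelSpace W] {g : W → V} {L : ℝ≥0} {Q B : Set W}

-- If `g p + v` is `r`-close to `x`, then `g q + v` is `(L + 1) * r`-close to `x` for all `q` in
-- the ball of radius `r` about `p`; counting the pairs `(q, v)` in two ways gives the bound.
lemma measure_closedBall_mul_measure_closedBall_sub_image_le (μ : Measure V) [μ.IsAddHaarMeasure]
    (ν : Measure W) [ν.IsAddHaarMeasure] (hg : Continuous g) (hgB : LipschitzOnWith L g B) {r : ℝ}
    (hr : 0 ≤ r) (hQB : ∀ p ∈ Q, closedBall p r ⊆ B) (x : V) :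
    ν (closedBall 0 r) * μ (closedBall x r - g '' Q) ≤
      μ (closedBall 0 ((L + 1) * r)) * ν B := by
  have hA : IsClosed {z : W × V | g z.1 + z.2 ∈ closedBall x ((L + 1) * r)} :=
    isClosed_closedBall.preimage (by fun_prop)
  rw [← Measure.restrict_apply_univ B]
  refine mul_measure_le_mul_measure_univ_of_fibers hA.measurableSet ?_ fun q ↦ ?_
  · rintro _ ⟨y, hy, _, ⟨p, hp, rfl⟩, rfl⟩
    rw [Measure.restrict_apply (hA.preimage (by fun_prop)).measurableSet,
      ← Measure.addHaar_closedBall_center ν p r]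
    refine measure_mono fun q hq ↦ ⟨?_, hQB p hp hq⟩
    have hpB : p ∈ B := hQB p hp (mem_closedBall_self hr)
    have hgq : dist (g q) (g p) ≤ L * r :=
      (hgB.dist_le_mul _ (hQB p hp hq) _ hpB).trans (by gcongr; exact hq)
    calc dist (g q + (y - g p)) x ≤ dist (g q + (y - g p)) y + dist y x := dist_triangle _ _ _
      _ = dist (g q) (g p) + dist y x := by
        rw [dist_eq_norm, dist_eq_norm (g q)]; congr 2; abel
      _ ≤ L * r + r := add_le_add hgq hy
      _ = (L + 1) * r := by ring
  · rw [← Measure.addHaar_closedBall_center μ (-g q + x)]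
    refine measure_mono fun v hv ↦ ?_
    simpa [dist_eq_norm, sub_eq_add_neg, add_assoc, add_comm, add_left_comm] using hv

lemma exists_measure_closedBall_sub_image_le (μ : Measure V) [μ.IsAddHaarMeasure]
    (hg : LocallyLipschitz g) (hQ : Bornology.IsBounded Q) :
    ∃ C : ℝ≥0∞, C ≠ ∞ ∧ ∀ (x : V) (r : ℝ), 0 < r → r ≤ 1 →
      μ (closedBall x r - g '' Q) ≤ C * ENNReal.ofReal r ^ ((finrank ℝ V : ℝ) - finrank ℝ W) := by
  let B : Set W := cthickening 1 Q
  have hB : IsCompact B := isCompact_of_isClosed_isBounded isClosed_cthickening hQ.cthickening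
  obtain ⟨L, hL⟩ := hg.locallyLipschitzOn.exists_lipschitzOnWith_of_compact hB
  let ν : Measure W := Measure.addHaar
  have hν : ν (ball 0 1) ≠ 0 := (measure_ball_pos _ _ one_pos).ne'
  have hν' : ν (ball 0 1) ≠ ∞ := measure_ball_lt_top.ne
  let D : ℝ≥0∞ := ENNReal.ofReal (L + 1) ^ finrank ℝ V * μ (ball 0 1) * ν B
  have hD : D ≠ ∞ := ENNReal.mul_ne_top
    (ENNReal.mul_ne_top (by finiteness) measure_ball_lt_top.ne) hB.measure_ne_top
  refine ⟨D / ν (ball 0 1), ENNReal.div_ne_top hD hν, fun x r hr hr1 ↦ ?_⟩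
  set ρ : ℝ≥0∞ := ENNReal.ofReal r with hρ_def
  have hρ : ρ ≠ 0 := by simpa [ρ] using hr
  have hρ' : ρ ≠ ∞ := ENNReal.ofReal_ne_top
  have hcount : μ (closedBall x r - g '' Q) * (ν (ball 0 1) * ρ ^ finrank ℝ W) ≤
      D * ρ ^ finrank ℝ V := by
    have h := measure_closedBall_mul_measure_closedBall_sub_image_le μ ν hg.continuous hL hr.le
      (fun p hp ↦ (closedBall_subset_closedBall hr1).trans (closedBall_subset_cthickening hp 1)) x
    rw [Measure.addHaar_closedBall _ _ hr.le, Measure.addHaar_closedBall _ _ (by positivity),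
      ENNReal.ofReal_pow hr.le, ENNReal.ofReal_pow (by positivity),
      ENNReal.ofReal_mul (by positivity), ← hρ_def] at h
    convert h using 1 <;> ring
  calc μ (closedBall x r - g '' Q)
      ≤ D * ρ ^ finrank ℝ V / (ν (ball 0 1) * ρ ^ finrank ℝ W) :=
        (ENNReal.le_div_iff_mul_le (.inl (mul_ne_zero hν (pow_ne_zero _ hρ)))
          (.inl (by finiteness))).2 hcount
    _ = D / ν (ball 0 1) * (ρ ^ finrank ℝ V / ρ ^ finrank ℝ W) :=
        ENNReal.mul_div_mul_comm (.inl hν) (.inl hν')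
    _ = D / ν (ball 0 1) * ρ ^ ((finrank ℝ V : ℝ) - finrank ℝ W) := by
        rw [ENNReal.rpow_sub _ _ hρ hρ', ENNReal.rpow_natCast, ENNReal.rpow_natCast]

lemma exists_subOuterMeasure_image_le (μ : Measure V) [μ.IsAddHaarMeasure]
    (hg : LocallyLipschitz g) (hQ : Bornology.IsBounded Q) :
    ∃ C : ℝ≥0∞, C ≠ ∞ ∧ ∀ s : Set V, ediam s ≤ 2⁻¹ →
      subOuterMeasure μ (g '' Q) s ≤ C * ediam s ^ ((finrank ℝ V : ℝ) - finrank ℝ W) := by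
  obtain ⟨C, hC, hball⟩ := exists_measure_closedBall_sub_image_le μ hg hQ
  refine ⟨C, hC, fun s hs ↦ ?_⟩
  obtain rfl | ⟨x, hx⟩ := s.eq_empty_or_nonempty
  · simp
  have hs_top : ediam s ≠ ∞ := ne_top_of_le_ne_top (by simp) hs
  have hdiam : diam s < 1 := ENNReal.toReal_lt_of_lt_ofReal (hs.trans_lt (by simp))
  -- `s` may have diameter `0`, so it is enclosed in balls of radius `r` decreasing to `diam s`.
  have hlim : Tendsto
      (fun r ↦ C * ENNReal.ofReal r ^ ((finrank ℝ V : ℝ) - finrank ℝ W)) (𝓝[>] diam s)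
      (𝓝 (C * ENNReal.ofReal (diam s) ^ ((finrank ℝ V : ℝ) - finrank ℝ W))) :=
    ((ENNReal.continuous_const_mul hC).comp
      (ENNReal.continuous_rpow_const.comp ENNReal.continuous_ofReal)).continuousWithinAt
  rw [diam, ENNReal.ofReal_toReal hs_top] at hlim
  refine ge_of_tendsto hlim ?_
  filter_upwards [Ioo_mem_nhdsGT hdiam] with r hr
  have hsub : s ⊆ closedBall x r := fun y hy ↦
    (dist_le_diam_of_mem' hs_top hy hx).trans hr.1.le
  exact (measure_mono (sub_subset_sub_right hsub)).trans
    (hball x r (diam_nonneg.trans_lt hr.1) hr.2.le)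

end Translates

theorem measure_sub_range_eq_zero (μ : Measure V) [μ.IsAddHaarMeasure] {g : W → V}
    (hg : LocallyLipschitz g) {E : Set V} (hE : μH[(finrank ℝ V : ℝ) - finrank ℝ W] E = 0) :
    μ (E - range g) = 0 := by
  borelize W
  have hrange : E - range g = ⋃ N : ℕ, E - g '' closedBall 0 N := by
    rw [← sub_iUnion, ← image_iUnion, iUnion_closedBall_nat, image_univ]
  rw [hrange, measure_iUnion_null_iff]
  intro N
  obtain ⟨C, hC, hbound⟩ :=
    exists_subOuterMeasure_image_le μ hg (isBounded_closedBall (x := (0 : W)) (r := N))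
  exact outerMeasure_eq_zero_of_hausdorffMeasure_eq_zero hC (by simp) hbound hE

section GeneralPosition

variable {X : Type*} [TopologicalSpace X] {ι : X → W} {E : Set V}

theorem exists_continuousMap_dist_lt_forall_notMem (hι : IsClosedEmbedding ι)
    (hE : μH[(finrank ℝ V : ℝ) - finrank ℝ W] E = 0) (F : C(X, V)) {ε : ℝ} (hε : 0 < ε) :
    ∃ G : C(X, V), (∀ x, dist (G x) (F x) < ε) ∧ ∀ x, G x ∉ E := by
  obtain ⟨Φ, hΦ⟩ := F.exists_extension' hι
  obtain ⟨g, hg_smooth, hgΦ, -⟩ := Φ.continuous.exists_contDiff_approx 1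
    (continuous_const (y := ε / 2)) fun _ ↦ half_pos hε
  have hnull : Measure.addHaar (E - range g) = 0 :=
    measure_sub_range_eq_zero _ hg_smooth.locallyLipschitz hE
  -- `v ∉ E - range g` says that the translate `g + v` misses `E`.
  obtain ⟨v, hv, hvE⟩ : ∃ v ∈ ball (0 : V) (ε / 2), v ∉ E - range g := by
    by_contra! hsub
    exact (measure_ball_pos Measure.addHaar (0 : V) (half_pos hε)).ne'
      (measure_mono_null hsub hnull)
  refine ⟨⟨fun x ↦ g (ι x) + v, by have := hg_smooth.continuous; have := hι.continuous; fun_prop⟩,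
    fun x ↦ ?_, fun x hx ↦ hvE ⟨_, hx, _, ⟨ι x, rfl⟩, add_sub_cancel_left _ _⟩⟩
  calc dist (g (ι x) + v) (F x) ≤ dist (g (ι x) + v) (g (ι x)) + dist (g (ι x)) (Φ (ι x)) := by
        rw [← hΦ]; exact dist_triangle _ _ _
    _ < ε / 2 + ε / 2 := add_lt_add (by simpa using hv) (hgΦ _)
    _ = ε := add_halves ε

theorem exists_continuousMap_forall_mem_diff_eqOn [CompactSpace X] (hι : IsClosedEmbedding ι)
    {U : Set V} (hU : IsOpen U) (hUE : IsOpen (U \ E))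
    (hE : μH[(finrank ℝ V : ℝ) - finrank ℝ W] E = 0) {F : C(X, V)} (hFU : ∀ x, F x ∈ U)
    {B : Set X} (hB : IsClosed B) (hFB : ∀ x ∈ B, F x ∉ E) :
    ∃ H : C(X, V), (∀ x, H x ∈ U \ E) ∧ EqOn H F B := by
  have : T2Space X := hι.isEmbedding.t2Space
  obtain ⟨δ, hδ, hδU⟩ := (isCompact_range F.continuous).exists_thickening_subset_open hU
    (range_subset_iff.2 hFU)
  obtain ⟨η, hη, hηUE⟩ := (hB.isCompact.image F.continuous).exists_thickening_subset_open hUE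
    (image_subset_iff.2 fun x hx ↦ ⟨hFU x, hFB x hx⟩)
  let O : Set X := F ⁻¹' thickening (η / 2) (F '' B)
  have hO : IsOpen O := isOpen_thickening.preimage F.continuous
  have hBO : B ⊆ O := fun x hx ↦ self_subset_thickening (half_pos hη) _ (mem_image_of_mem F hx)
  obtain ⟨χ, hχB, hχO, hχ⟩ := exists_continuous_zero_one_of_isClosed hB hO.isClosed_compl
    (disjoint_compl_right_iff_subset.2 hBO)
  obtain ⟨G, hGF, hGE⟩ :=
    exists_continuousMap_dist_lt_forall_notMem hι hE F (lt_min hδ (half_pos hη))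
  let H : C(X, V) := ⟨fun x ↦ AffineMap.lineMap (F x) (G x) (χ x), by fun_prop⟩
  have hHF (x : X) : dist (H x) (F x) < min δ (η / 2) := by
    calc dist (H x) (F x) = ‖χ x‖ * dist (F x) (G x) := dist_lineMap_left _ _ _
      _ ≤ dist (G x) (F x) := by
        rw [dist_comm, Real.norm_of_nonneg (hχ x).1]
        exact mul_le_of_le_one_left dist_nonneg (hχ x).2
      _ < min δ (η / 2) := hGF x
  refine ⟨H, fun x ↦ ?_, fun x hx ↦ by simp [H, hχB hx]⟩
  by_cases hx : x ∈ O
  · obtain ⟨y, hy, hxy⟩ := mem_thickening_iff.1 hx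
    refine hηUE (mem_thickening_iff.2 ⟨y, hy, ?_⟩)
    calc dist (H x) y ≤ dist (H x) (F x) + dist (F x) y := dist_triangle _ _ _
      _ < η / 2 + η / 2 := add_lt_add ((hHF x).trans_le (min_le_right _ _)) hxy
      _ = η := add_halves η
  · have hHG : H x = G x := by simp [H, hχO hx]
    refine ⟨hδU (mem_thickening_iff.2 ⟨F x, mem_range_self x, ?_⟩), hHG ▸ hGE x⟩
    exact (hHF x).trans_le (min_le_left _ _)

theorem exists_homotopyRel_forall_mem_diff [CompactSpace X] (hι : IsClosedEmbedding ι)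
    {U : Set V} (hU : IsOpen U) (hUE : IsOpen (U \ E))
    (hE : μH[(finrank ℝ V : ℝ) - (finrank ℝ W + 1)] E = 0) {f₀ f₁ : C(X, V)} {S : Set X}
    (hS : IsClosed S) (hf₀ : ∀ x, f₀ x ∉ E) (hf₁ : ∀ x, f₁ x ∉ E) (F : f₀.HomotopyRel f₁ S)
    (hFU : ∀ z, F z ∈ U) :
    ∃ H : f₀.HomotopyRel f₁ S, ∀ z, H z ∈ U \ E := by
  let B : Set (I × X) := {z | z.1 = 0} ∪ {z | z.1 = 1} ∪ {z | z.2 ∈ S}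
  have hB : IsClosed B := ((isClosed_eq continuous_fst continuous_const).union
    (isClosed_eq continuous_fst continuous_const)).union (hS.preimage continuous_snd)
  have hFB : ∀ z ∈ B, F z ∉ E := by
    rintro ⟨t, x⟩ (((rfl : t = 0) | (rfl : t = 1)) | (hx : x ∈ S))
    · simpa using hf₀ x
    · simpa using hf₁ x
    · simpa [F.eq_fst t hx] using hf₀ x
  have hIι : IsClosedEmbedding (Prod.map ((↑) : I → ℝ) ι) :=
    isClosed_Icc.isClosedEmbedding_subtypeVal.prodMap hι
  have hE' : μH[(finrank ℝ V : ℝ) - finrank ℝ (ℝ × W)] E = 0 := by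
    simpa [add_comm] using hE
  obtain ⟨H, hH, hHF⟩ := exists_continuousMap_forall_mem_diff_eqOn hIι hU hUE hE'
    (F := F.toContinuousMap) hFU hB hFB
  refine ⟨⟨⟨H, fun x ↦ ?_, fun x ↦ ?_⟩, fun t x hx ↦ ?_⟩, hH⟩
  · exact (hHF (.inl (.inl rfl))).trans (F.apply_zero x)
  · exact (hHF (.inl (.inr rfl))).trans (F.apply_one x)
  · exact (hHF (.inr hx)).trans (F.eq_fst t hx)

end GeneralPosition

section Complement

variable {U E : Set V}

theorem isPathConnected_diff_of_hausdorffMeasure_eq_zero (hU : IsOpen U) (hUc : IsPathConnected U)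
    (hUE : IsOpen (U \ E)) (hE : μH[(finrank ℝ V : ℝ) - 1] E = 0) : IsPathConnected (U \ E) := by
  have hI : IsClosedEmbedding ((↑) : I → ℝ) := isClosed_Icc.isClosedEmbedding_subtypeVal
  have hE' : μH[(finrank ℝ V : ℝ) - finrank ℝ ℝ] E = 0 := by simpa using hE
  rw [isPathConnected_iff]
  constructor
  · obtain ⟨x, hx⟩ := hUc.nonempty
    obtain ⟨H, hH, -⟩ := exists_continuousMap_forall_mem_diff_eqOn hI hU hUE hE'
      (F := .const I x) (fun _ ↦ hx) isClosed_empty (by simp)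
    exact ⟨H 0, hH 0⟩
  · intro x hx y hy
    obtain ⟨γ, hγ⟩ := hUc.joinedIn x hx.1 y hy.1
    obtain ⟨H, hH, hHγ⟩ := exists_continuousMap_forall_mem_diff_eqOn hI hU hUE hE'
      (F := γ.toContinuousMap) hγ (B := {0, 1}) (Set.toFinite _).isClosed
      (by simpa using ⟨hx.2, hy.2⟩)
    exact ⟨⟨H, by simpa using hHγ (mem_insert 0 _), by simpa using hHγ (mem_insert_of_mem 0 rfl)⟩,
      hH⟩

theorem complement_of_codim2_set_simply_connected_general (hU : IsOpen U)
    (hUc : IsSimplyConnected U) (hUE : IsOpen (U \ E))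
    (hE : μH[(finrank ℝ V : ℝ) - 2] E = 0) : IsSimplyConnected (U \ E) := by
  have hE₁ : μH[(finrank ℝ V : ℝ) - 1] E = 0 :=
    le_antisymm ((Measure.hausdorffMeasure_mono (by linarith) E).trans hE.le) bot_le
  have hE₂ : μH[(finrank ℝ V : ℝ) - (finrank ℝ ℝ + 1)] E = 0 := by
    norm_num [hE]
  rw [isSimplyConnected_iff_exists_homotopy_refl_forall_mem] at hUc ⊢
  refine ⟨isPathConnected_diff_of_hausdorffMeasure_eq_zero hU hUc.1 hUE hE₁, fun x γ hγ ↦ ?_⟩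
  obtain ⟨F, hF⟩ := hUc.2 x γ fun t ↦ (hγ t).1
  have hx : x ∉ E := by simpa using (hγ 0).2
  exact exists_homotopyRel_forall_mem_diff isClosed_Icc.isClosedEmbedding_subtypeVal hU hUE hE₂
    (Set.toFinite _).isClosed (fun t ↦ (hγ t).2) (fun _ ↦ hx) F hF

end Complement

end FiniteDimensional

/-- removing a relatively closed set of `(n-2)`-dimensional Hausdorff
measure zero from a simply connected open subset of ℝⁿ (n ≥ 3) leaves a simply
connected space. -/
theorem complement_of_codim2_set_simply_connected
    (n : ℕ) (hn : 3 ≤ n)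
    (U : Set (EuclideanSpace ℝ (Fin n)))
    (hU_ne : U.Nonempty) (hU_open : IsOpen U)
    (hU_sc : SimplyConnectedSpace U)
    (E : Set (EuclideanSpace ℝ (Fin n)))
    (hE_sub : E ⊆ U)
    (hE_closed : ∃ C : Set (EuclideanSpace ℝ (Fin n)), IsClosed C ∧ E = C ∩ U)
    (hE_null : μH[(n : ℝ) - 2] E = 0) :
    SimplyConnectedSpace ↥(U \ E) := by
  obtain ⟨C, hC, rfl⟩ := hE_closed
  exact complement_of_codim2_set_simply_connected_general hU_open hU_sc
    (by rw [sdiff_inter_self_eq_sdiff]; exact hU_open.sdiff hC) (by simpa using hE_null)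
end

section
/- Let n ≥ 3 and let F be a closed subset of ℝⁿ with μH[n−2](F) = 0. Let D̄ denote the closed unit ball of ℝ² = EuclideanSpace ℝ (Fin 2) and ∂D its boundary circle {x ∈ ℝ² : ‖x‖ = 1}. Let f : ℝ² → ℝⁿ be of class C¹ on D̄ (ContDiffOn ℝ 1 f D̄) with f(∂D) ∩ F = ∅. Then there exists g : ℝ² → ℝⁿ of class C¹ on D̄ such that g(x) = f(x) for all x ∈ ∂D and g(D̄) ∩ F = ∅. -/
open Filter Topology MeasureTheory
open scoped MeasureTheory

/-!
Push the disk by `g = f + φ • v`, where `φ x = 1 - ‖x‖ ^ 2` vanishes exactly on the boundary circle.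
The vectors `v` for which `g` meets `F` at an interior point are the image of `F × ball` under
the locally Lipschitz map `(y, x) ↦ (φ x)⁻¹ • (y - f x)`. Covering the ball by about `δ ^ (-2)`
sets of diameter `δ` shows that taking the product with it raises the dimension of a Hausdorff-null
set by at most `2`, so `F × ball` is `μH[n]`-null, and hence so is the set of bad `v`. Since `μH[n]`
is a Haar measure on `ℝⁿ`, a good `v` exists.
-/

open Metric Module Set
open scoped ENNReal NNReal

section CoveringNumber

variable {E : Type*} [NormedAddCommGroup E] [NormedSpace ℝ E] [FiniteDimensional ℝ E]

theorem encard_mul_pow_le_of_isSeparated {x : E} {R ε : ℝ≥0} {C : Set E}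
    (hCR : C ⊆ closedBall x R) (hC : IsSeparated (2 * ε) C) :
    (C.encard : ℝ≥0∞) * (ε : ℝ≥0∞) ^ finrank ℝ E ≤ (R + ε : ℝ≥0∞) ^ finrank ℝ E := by
  borelize E
  let μ : Measure E := Measure.addHaar
  have hvol (y : E) (s : ℝ≥0) :
      μ (closedBall y s) = (s : ℝ≥0∞) ^ finrank ℝ E * μ (ball 0 1) := by
    rw [μ.addHaar_closedBall y s.coe_nonneg, ENNReal.ofReal_pow s.coe_nonneg,
      ENNReal.ofReal_coe_nnreal]
  have hdisj : Pairwise (Function.onFun Disjoint fun y : C => closedBall (y : E) ε) := by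
    intro y z hyz
    refine closedBall_disjoint_closedBall ?_
    have hsep : (2 * ε : ℝ≥0∞) < edist (y : E) z := hC y.2 z.2 (Subtype.coe_ne_coe.mpr hyz)
    rw [edist_nndist] at hsep
    rw [← two_mul]
    exact_mod_cast hsep
  have hsub : ⋃ y : C, closedBall (y : E) ε ⊆ closedBall x (R + ε : ℝ≥0) := by
    refine iUnion_subset fun y => closedBall_subset_closedBall' ?_
    have hyR : dist (y : E) x ≤ R := hCR y.2
    push_cast
    linarith
  have hv : μ (ball 0 1) ≠ 0 := (measure_ball_pos μ 0 one_pos).ne'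
  refine (ENNReal.mul_le_mul_iff_left hv measure_ball_lt_top.ne).mp ?_
  calc C.encard * (ε : ℝ≥0∞) ^ finrank ℝ E * μ (ball 0 1)
      = ∑' y : C, μ (closedBall (y : E) ε) := by
        simp only [hvol, ENNReal.tsum_const, mul_assoc]
        rfl
    _ ≤ μ (⋃ y : C, closedBall (y : E) ε) :=
        tsum_meas_le_meas_iUnion_of_disjoint μ (fun _ => measurableSet_closedBall) hdisj
    _ ≤ (R + ε : ℝ≥0∞) ^ finrank ℝ E * μ (ball 0 1) := by
        rw [← ENNReal.coe_add, ← hvol x]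
        exact measure_mono hsub

theorem packingNumber_two_mul_closedBall_mul_pow_le (x : E) (R ε : ℝ≥0) :
    (packingNumber (2 * ε) (closedBall x R) : ℝ≥0∞) * (ε : ℝ≥0∞) ^ finrank ℝ E ≤
      (R + ε : ℝ≥0∞) ^ finrank ℝ E := by
  simp only [packingNumber, ENat.toENNReal_iSup, ENNReal.iSup_mul, iSup_le_iff, ENNReal.coe_mul,
    ENNReal.coe_ofNat]
  exact fun C hCR hC => encard_mul_pow_le_of_isSeparated hCR hC

theorem coveringNumber_closedBall_mul_pow_le (x : E) (R ε : ℝ≥0) :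
    (coveringNumber ε (closedBall x R) : ℝ≥0∞) * (ε : ℝ≥0∞) ^ finrank ℝ E ≤
      (2 * R + ε : ℝ≥0∞) ^ finrank ℝ E := by
  obtain ⟨δ, rfl⟩ : ∃ δ, ε = 2 * δ := ⟨ε / 2, (mul_div_cancel₀ ε two_ne_zero).symm⟩
  calc (coveringNumber (2 * δ) (closedBall x R) : ℝ≥0∞) * (2 * δ : ℝ≥0) ^ finrank ℝ E
      ≤ packingNumber (2 * δ) (closedBall x R) * (2 * δ : ℝ≥0) ^ finrank ℝ E := by
        gcongr
        exact coveringNumber_le_packingNumber _ _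
    _ = 2 ^ finrank ℝ E *
          (packingNumber (2 * δ) (closedBall x R) * (δ : ℝ≥0∞) ^ finrank ℝ E) := by
        rw [ENNReal.coe_mul, ENNReal.coe_ofNat, mul_pow, mul_left_comm]
    _ ≤ 2 ^ finrank ℝ E * (R + δ : ℝ≥0∞) ^ finrank ℝ E := by
        gcongr
        exact packingNumber_two_mul_closedBall_mul_pow_le x R δ
    _ = (2 * R + (2 * δ : ℝ≥0) : ℝ≥0∞) ^ finrank ℝ E := by
        rw [← mul_pow, mul_add, ENNReal.coe_mul, ENNReal.coe_ofNat]

end CoveringNumber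

section Product

variable {X Y : Type*} [EMetricSpace X] [EMetricSpace Y]

theorem pre_ediam_rpow_prod_le {A : Set X} {B : Set Y} {ε : ℝ≥0} {p : ℝ} (hp : 0 ≤ p)
    (hA : ediam A ≤ 2 * ε) (hB : coveringNumber ε B ≠ ⊤) :
    OuterMeasure.mkMetric'.pre (fun s : Set (X × Y) => ediam s ^ p) (2 * ε) (A ×ˢ B) ≤
      coveringNumber ε B * (2 * ε : ℝ≥0∞) ^ p := by
  obtain ⟨N, -, hN_finite, hN_cover, hN_card⟩ := exists_set_encard_eq_coveringNumber hB
  have hdiam (y : Y) : ediam (A ×ˢ closedEBall y ε) ≤ 2 * ε := by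
    refine ediam_le fun z hz w hw => max_le ?_ ?_
    · exact (edist_le_ediam_of_mem hz.1 hw.1).trans hA
    · exact (edist_le_ediam_of_mem hz.2 hw.2).trans ediam_closedEBall_le
  have hcover : A ×ˢ B ⊆ ⋃ y ∈ N, A ×ˢ closedEBall y ε := by
    rw [← prod_iUnion₂]
    exact prod_mono_right (isCover_iff_subset_iUnion_closedEBall.mp hN_cover)
  set ν := OuterMeasure.mkMetric'.pre (fun s : Set (X × Y) => ediam s ^ p) (2 * ε)
  calc ν (A ×ˢ B)
      ≤ ∑' y : N, ν (A ×ˢ closedEBall (y : Y) ε) :=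
        (measure_mono hcover).trans (measure_biUnion_le ν hN_finite.countable _)
    _ ≤ ∑' _ : N, (2 * ε : ℝ≥0∞) ^ p := ENNReal.tsum_le_tsum fun y =>
        (OuterMeasure.mkMetric'.pre_le (hdiam y)).trans (ENNReal.rpow_le_rpow (hdiam y) hp)
    _ = coveringNumber ε B * (2 * ε : ℝ≥0∞) ^ p := by
        rw [ENNReal.tsum_const, ← hN_card]
        rfl

theorem pre_ediam_rpow_prod_le_of_coveringNumber_le {A : Set X} {B : Set Y} {C : ℝ≥0∞} {d : ℕ}
    {s : ℝ} {ε₀ : ℝ≥0} (hsd : 0 ≤ s + d) (hC : C ≠ ∞) (hA : ediam A < 2 * ε₀)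
    (hB : ∀ ε ∈ Ioo 0 ε₀, coveringNumber ε B * (ε : ℝ≥0∞) ^ d ≤ C) :
    OuterMeasure.mkMetric'.pre (fun t : Set (X × Y) => ediam t ^ (s + d)) (2 * ε₀) (A ×ˢ B) ≤
      2 ^ d * C * ediam A ^ s := by
  obtain ⟨η, hη⟩ : ∃ η : ℝ≥0, 2 * (η : ℝ≥0∞) = ediam A := by
    lift ediam A to ℝ≥0 using hA.ne_top with a
    exact ⟨a / 2, by rw [← ENNReal.coe_ofNat, ← ENNReal.coe_mul, mul_div_cancel₀ a two_ne_zero]⟩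
  rw [← hη] at hA ⊢
  have hη_lt : η < ε₀ := by
    simpa only [ENNReal.mul_lt_mul_iff_right two_ne_zero ENNReal.ofNat_ne_top,
      ENNReal.coe_lt_coe] using hA
  -- `ediam A` may vanish, so take the scale slightly larger and let it tend to `ediam A`.
  have hlim : Tendsto (fun ε : ℝ≥0 => 2 ^ d * C * (2 * ε : ℝ≥0∞) ^ s) (𝓝[>] η)
      (𝓝 (2 ^ d * C * (2 * η : ℝ≥0∞) ^ s)) := by
    have hcont : Continuous fun ε : ℝ≥0 => (2 * ε : ℝ≥0∞) ^ s :=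
      ENNReal.continuous_rpow_const.comp
        ((ENNReal.continuous_const_mul ENNReal.ofNat_ne_top).comp ENNReal.continuous_coe)
    exact ENNReal.Tendsto.const_mul (hcont.tendsto η |>.mono_left nhdsWithin_le_nhds)
      (Or.inr (ENNReal.mul_ne_top (ENNReal.pow_ne_top ENNReal.ofNat_ne_top) hC))
  refine ge_of_tendsto hlim ?_
  filter_upwards [Ioo_mem_nhdsGT hη_lt] with ε ⟨hηε, hε⟩
  have hε_pos : 0 < ε := zero_le.trans_lt hηε
  have hε_ne : (2 * ε : ℝ≥0∞) ≠ 0 := mul_ne_zero two_ne_zero (ENNReal.coe_ne_zero.mpr hε_pos.ne')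
  have hε_top : (2 * ε : ℝ≥0∞) ≠ ∞ := ENNReal.mul_ne_top ENNReal.ofNat_ne_top ENNReal.coe_ne_top
  have hcov := hB ε ⟨hε_pos, hε⟩
  have hcov_top : coveringNumber ε B ≠ ⊤ := by
    intro h
    rw [h, ENat.toENNReal_top, ENNReal.top_mul (by positivity), top_le_iff] at hcov
    exact hC hcov
  calc OuterMeasure.mkMetric'.pre (fun t : Set (X × Y) => ediam t ^ (s + d)) (2 * ε₀) (A ×ˢ B)
      ≤ OuterMeasure.mkMetric'.pre (fun t : Set (X × Y) => ediam t ^ (s + d)) (2 * ε) (A ×ˢ B) :=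
        OuterMeasure.mkMetric'.mono_pre _ (by gcongr) _
    _ ≤ coveringNumber ε B * (2 * ε : ℝ≥0∞) ^ (s + d) :=
        pre_ediam_rpow_prod_le hsd (hη ▸ by gcongr) hcov_top
    _ = 2 ^ d * (coveringNumber ε B * (ε : ℝ≥0∞) ^ d) * (2 * ε : ℝ≥0∞) ^ s := by
        rw [ENNReal.rpow_add _ _ hε_ne hε_top, ENNReal.rpow_natCast, mul_pow]
        ring
    _ ≤ 2 ^ d * C * (2 * ε : ℝ≥0∞) ^ s := by gcongr

variable [MeasurableSpace X] [BorelSpace X]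

theorem pre_ediam_rpow_prod_le_hausdorffMeasure {B : Set Y} {C : ℝ≥0∞} {d : ℕ} {s : ℝ} {ε₀ : ℝ≥0}
    (hsd : 0 ≤ s + d) (hC₀ : C ≠ 0) (hC : C ≠ ∞) (hε₀ : 0 < ε₀)
    (hB : ∀ ε ∈ Ioo 0 ε₀, coveringNumber ε B * (ε : ℝ≥0∞) ^ d ≤ C) (A : Set X) :
    OuterMeasure.mkMetric'.pre (fun t : Set (X × Y) => ediam t ^ (s + d)) (2 * ε₀) (A ×ˢ B) ≤
      2 ^ d * C * μH[s] A := by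
  set ν := OuterMeasure.mkMetric'.pre (fun t : Set (X × Y) => ediam t ^ (s + d)) (2 * ε₀)
  have hε₀' : (0 : ℝ≥0∞) < ε₀ := ENNReal.coe_pos.mpr hε₀
  -- `t ↦ ν (t ×ˢ B)` is an outer measure, so test it on sets of small diameter.
  let ν_prod : OuterMeasure X := .map Prod.fst (.restrict (Prod.snd ⁻¹' B) ν)
  have hν_prod (t : Set X) : ν_prod t = ν (t ×ˢ B) :=
    OuterMeasure.restrict_apply (Prod.snd ⁻¹' B) (Prod.fst ⁻¹' t) ν
  have hle : ν_prod ≤ OuterMeasure.mkMetric ((2 ^ d * C) • fun δ => δ ^ s) := by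
    refine OuterMeasure.le_mkMetric _ _ ε₀ hε₀' fun t ht => (hν_prod t).trans_le ?_
    refine pre_ediam_rpow_prod_le_of_coveringNumber_le hsd hC (ht.trans_lt ?_) hB
    rw [two_mul]
    exact ENNReal.lt_add_right ENNReal.coe_ne_top hε₀'.ne'
  rw [OuterMeasure.mkMetric_smul _
    (ENNReal.mul_ne_top (ENNReal.pow_ne_top ENNReal.ofNat_ne_top) hC)
    (mul_ne_zero (pow_ne_zero d two_ne_zero) hC₀)] at hle
  calc ν (A ×ˢ B) = ν_prod A := (hν_prod A).symm
    _ ≤ 2 ^ d * C * OuterMeasure.mkMetric (fun δ => δ ^ s) A := hle A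
    _ = 2 ^ d * C * μH[s] A := by rw [OuterMeasure.coe_mkMetric]; rfl

variable [MeasurableSpace Y] [BorelSpace Y] [SecondCountableTopologyEither X Y]

theorem hausdorffMeasure_prod_le {B : Set Y} {C : ℝ≥0∞} {d : ℕ} {s : ℝ}
    (hsd : 0 ≤ s + d) (hC₀ : C ≠ 0) (hC : C ≠ ∞)
    (hB : ∀ᶠ ε : ℝ≥0 in 𝓝[>] 0, coveringNumber ε B * (ε : ℝ≥0∞) ^ d ≤ C) (A : Set X) :
    μH[s + d] (A ×ˢ B) ≤ 2 ^ d * C * μH[s] A := by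
  obtain ⟨ε₁, hε₁, hB⟩ := mem_nhdsGT_iff_exists_Ioo_subset.mp hB
  have hscale : Tendsto (fun ε : ℝ≥0 => (2 * ε : ℝ≥0∞)) (𝓝[>] 0) (𝓝[>] 0) := by
    refine tendsto_nhdsWithin_iff.mpr ⟨?_, ?_⟩
    · have hcont : Continuous fun ε : ℝ≥0 => (2 * ε : ℝ≥0∞) :=
        (ENNReal.continuous_const_mul ENNReal.ofNat_ne_top).comp ENNReal.continuous_coe
      simpa only [ENNReal.coe_zero, mul_zero] using (hcont.tendsto 0).mono_left nhdsWithin_le_nhds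
    · filter_upwards [self_mem_nhdsWithin] with ε hε
      exact ENNReal.mul_pos two_ne_zero (ENNReal.coe_ne_zero.mpr hε.ne')
  rw [Measure.hausdorffMeasure, ← OuterMeasure.coe_mkMetric]
  refine le_of_tendsto ((OuterMeasure.mkMetric'.tendsto_pre _ _).comp hscale) ?_
  filter_upwards [Ioc_mem_nhdsGT hε₁] with ε hε
  exact pre_ediam_rpow_prod_le_hausdorffMeasure hsd hC₀ hC hε.1
    (fun δ hδ => hB ⟨hδ.1, hδ.2.trans_le hε.2⟩) A

theorem hausdorffMeasure_prod_univ_eq_zero {E : Type*} [NormedAddCommGroup E] [NormedSpace ℝ E]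
    [FiniteDimensional ℝ E] [MeasurableSpace E] [BorelSpace E] {s : ℝ} (hs : 0 ≤ s + finrank ℝ E)
    {A : Set X} (hA : μH[s] A = 0) : μH[s + finrank ℝ E] (A ×ˢ (univ : Set E)) = 0 := by
  rw [← iUnion_closedBall_nat (0 : E), prod_iUnion, measure_iUnion_null_iff]
  intro R
  set C : ℝ≥0∞ := (2 * (R : ℝ≥0) + (1 : ℝ≥0)) ^ finrank ℝ E
  have hC₀ : C ≠ 0 := pow_ne_zero _ (by simp)
  have hC : C ≠ ∞ := ENNReal.pow_ne_top
    (ENNReal.add_ne_top.mpr ⟨ENNReal.mul_ne_top ENNReal.ofNat_ne_top ENNReal.coe_ne_top,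
      ENNReal.coe_ne_top⟩)
  refine le_zero_iff.mp ((hausdorffMeasure_prod_le hs hC₀ hC ?_ A).trans_eq (by rw [hA, mul_zero]))
  filter_upwards [Ioc_mem_nhdsGT one_pos] with ε hε
  exact (coveringNumber_closedBall_mul_pow_le 0 R ε).trans
    (pow_le_pow_left' (add_le_add_right (ENNReal.coe_le_coe.mpr hε.2) _) _)

end Product

section Transversality

theorem hausdorffMeasure_image_eq_zero_of_locallyLipschitzOn {X Y : Type*}
    [EMetricSpace X] [MeasurableSpace X] [BorelSpace X] [SecondCountableTopology X]
    [EMetricSpace Y] [MeasurableSpace Y] [BorelSpace Y] {f : X → Y} {S : Set X} {p : ℝ}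
    (hf : LocallyLipschitzOn S f) (hp : 0 ≤ p) (hS : μH[p] S = 0) : μH[p] (f '' S) = 0 := by
  suffices OuterMeasure.comap f μH[p].toOuterMeasure S = 0 from this
  refine measure_null_of_locally_null S fun x hx => ?_
  obtain ⟨K, t, ht, hKt⟩ := hf hx
  refine ⟨S ∩ t, Filter.inter_mem self_mem_nhdsWithin ht, ?_⟩
  suffices μH[p] (f '' (S ∩ t)) = 0 from this
  have hSt : μH[p] (S ∩ t) = 0 := measure_mono_null inter_subset_left hS
  refine le_zero_iff.mp (((hKt.mono inter_subset_right).hausdorffMeasure_image_le hp).trans_eq ?_)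
  rw [hSt, mul_zero]

variable {E V : Type*} [NormedAddCommGroup E] [NormedSpace ℝ E] [FiniteDimensional ℝ E]
  [NormedAddCommGroup V] [NormedSpace ℝ V] [MeasurableSpace V] [BorelSpace V]

theorem ae_forall_add_smul_notMem [SecondCountableTopology V] {p : ℝ} (hp : 0 ≤ p) {A : Set V}
    (hA : μH[p - finrank ℝ E] A = 0) {U : Set E} (hU : Convex ℝ U) {f : E → V} {φ : E → ℝ}
    (hf : ContDiffOn ℝ 1 f U) (hφ : ContDiffOn ℝ 1 φ U) (hφ₀ : ∀ x ∈ U, φ x ≠ 0) :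
    ∀ᵐ v ∂(μH[p] : Measure V), ∀ x ∈ U, f x + φ x • v ∉ A := by
  borelize E
  -- `f x + φ x • v = y` with `x ∈ U` means `v = G (y, x)`, so the bad `v` form `G '' (A ×ˢ U)`.
  let G (q : V × E) : V := (φ q.2)⁻¹ • (q.1 - f q.2)
  have hG : ContDiffOn ℝ 1 G (univ ×ˢ U) := by
    have hmaps : MapsTo Prod.snd ((univ : Set V) ×ˢ U) U := fun _ hq => hq.2
    exact ((hφ.comp contDiffOn_snd hmaps).inv fun q hq => hφ₀ q.2 hq.2).smul
      (contDiffOn_fst.sub (hf.comp contDiffOn_snd hmaps))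
  have hG_lip : LocallyLipschitzOn (A ×ˢ U) G :=
    (hG.locallyLipschitzOn (convex_univ.prod hU)).mono (prod_mono_left (subset_univ A))
  have hAU : μH[p] (A ×ˢ U) = 0 := by
    refine measure_mono_null (prod_mono_right (subset_univ U)) ?_
    have := hausdorffMeasure_prod_univ_eq_zero (E := E) (by rwa [sub_add_cancel]) hA
    rwa [sub_add_cancel] at this
  have hnull : μH[p] (G '' (A ×ˢ U)) = 0 :=
    hausdorffMeasure_image_eq_zero_of_locallyLipschitzOn hG_lip hp hAU
  filter_upwards [measure_eq_zero_iff_ae_notMem.mp hnull] with v hv x hx hvA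
  refine hv ⟨(f x + φ x • v, x), ⟨hvA, hx⟩, ?_⟩
  simp only [G, add_sub_cancel_left, inv_smul_smul₀ (hφ₀ x hx)]

end Transversality

theorem disk_perturbation_off_thin_set_general {E V : Type*}
    [NormedAddCommGroup E] [InnerProductSpace ℝ E] [FiniteDimensional ℝ E]
    [NormedAddCommGroup V] [NormedSpace ℝ V] [FiniteDimensional ℝ V]
    [MeasurableSpace V] [BorelSpace V] {A : Set V}
    (hA : μH[(finrank ℝ V : ℝ) - finrank ℝ E] A = 0) {k : WithTop ℕ∞} (hk : k ≠ 0)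
    {c : E} {r : ℝ} {f : E → V} (hf : ContDiffOn ℝ k f (closedBall c r))
    (hf_sphere : Disjoint (f '' sphere c r) A) :
    ∃ g : E → V, ContDiffOn ℝ k g (closedBall c r) ∧ EqOn g f (sphere c r) ∧
      Disjoint (g '' closedBall c r) A := by
  let φ (x : E) : ℝ := r ^ 2 - ‖x - c‖ ^ 2
  have hφ {m : WithTop ℕ∞} : ContDiff ℝ m φ :=
    contDiff_const.sub ((contDiff_id.sub contDiff_const).norm_sq ℝ)
  have hφ_ball : ∀ x ∈ ball c r, φ x ≠ 0 := fun x hx =>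
    (sub_pos.mpr (pow_lt_pow_left₀ (mem_ball_iff_norm.mp hx) (norm_nonneg _) two_ne_zero)).ne'
  have hφ_sphere : ∀ x ∈ sphere c r, φ x = 0 := fun x hx => by
    simp only [φ, mem_sphere_iff_norm.mp hx, sub_self]
  have hf_ball : ContDiffOn ℝ 1 f (ball c r) :=
    (hf.of_le (ENat.one_le_iff_ne_zero_withTop.mpr hk)).mono ball_subset_closedBall
  obtain ⟨v, hv⟩ := (ae_forall_add_smul_notMem (Nat.cast_nonneg _) hA (convex_ball c r) hf_ball
    hφ.contDiffOn hφ_ball).exists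
  have hg_sphere : EqOn (fun x => f x + φ x • v) f (sphere c r) := fun x hx => by
    simp only [hφ_sphere x hx, zero_smul, add_zero]
  refine ⟨fun x => f x + φ x • v, hf.add (hφ.smul contDiff_const).contDiffOn, hg_sphere, ?_⟩
  rw [← ball_union_sphere, image_union, hg_sphere.image_eq, disjoint_union_left]
  exact ⟨disjoint_left.mpr (forall_mem_image.mpr hv), hf_sphere⟩

/-- a `C¹` disk whose boundary avoids a closed set `F` of
`(n-2)`-dimensional Hausdorff measure zero can be replaced, keeping the same
boundary values, by a `C¹` disk avoiding `F` entirely. -/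
theorem disk_perturbation_off_thin_set
    (n : ℕ) (hn : 3 ≤ n)
    (F : Set (EuclideanSpace ℝ (Fin n)))
    (hF_closed : IsClosed F)
    (hF_null : μH[(n : ℝ) - 2] F = 0)
    (f : EuclideanSpace ℝ (Fin 2) → EuclideanSpace ℝ (Fin n))
    (hf : ContDiffOn ℝ 1 f (Metric.closedBall (0 : EuclideanSpace ℝ (Fin 2)) 1))
    (hf_bd : f '' (Metric.sphere (0 : EuclideanSpace ℝ (Fin 2)) 1) ∩ F = ∅) :
    ∃ g : EuclideanSpace ℝ (Fin 2) → EuclideanSpace ℝ (Fin n),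
      ContDiffOn ℝ 1 g (Metric.closedBall (0 : EuclideanSpace ℝ (Fin 2)) 1) ∧
      (∀ x ∈ Metric.sphere (0 : EuclideanSpace ℝ (Fin 2)) 1, g x = f x) ∧
      g '' (Metric.closedBall (0 : EuclideanSpace ℝ (Fin 2)) 1) ∩ F = ∅ := by
  obtain ⟨g, hg, hg_sphere, hg_disjoint⟩ := disk_perturbation_off_thin_set_general
    (by simpa only [finrank_euclideanSpace_fin, Nat.cast_ofNat] using hF_null) one_ne_zero hf
    (disjoint_iff_inter_eq_empty.mpr hf_bd)
  exact ⟨g, hg, hg_sphere, disjoint_iff_inter_eq_empty.mp hg_disjoint⟩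
end

section
/- Let n ≥ 3 and let F ⊆ ℝⁿ satisfy μH[n−2](F) = 0. Let D̄ be the closed unit ball of ℝ² = EuclideanSpace ℝ (Fin 2). Then, in the product metric space ℝ² × ℝⁿ (with the product metric), the n-dimensional Hausdorff measure of the product set D̄ × F is zero: μH[n](D̄ ×ˢ F) = 0. -/
open Filter Topology MeasureTheory
open scoped MeasureTheory

/-!
A bounded subset of an `m`-dimensional normed space is covered by `O(ε ^ (-m))` balls of radius `ε`,
by comparing the volumes of disjoint balls. Hence if `t` has diameter at most `2 * ε`, the product
`A × t` is covered by `O(ε ^ (-m))` sets of diameter `2 * ε`, so its `(m + d)`-dimensional Hausdorff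
content is `O(ε ^ d)`. Thus `t ↦ A × t` pulls this content back to an outer measure bounded on small
sets by a multiple of `diam t ^ d`, hence everywhere by a multiple of `μH[d]`.
-/

open Metric Module Set
open scoped ENNReal NNReal

section BoxContent

variable {X : Type*} [PseudoEMetricSpace X] {A : Set X} {s : ℝ}

/-- The upper `s`-dimensional box-counting content of `A`: the upper limit, as `ε → 0`, of `N ε ^ s`
where `N` is the number of closed balls of radius `ε`, centred in `A`, needed to cover `A`. It is
the covering-number analogue of the upper Minkowski content, without a normalizing constant. -/
noncomputable def upperBoxContent (s : ℝ) (A : Set X) : ℝ≥0∞ :=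
  limsup (fun ε : ℝ≥0 ↦ (coveringNumber ε A : ℝ≥0∞) * (ε : ℝ≥0∞) ^ s) (𝓝[>] 0)

lemma eventually_coveringNumber_mul_rpow_lt {C : ℝ≥0∞} (hA : upperBoxContent s A < C) :
    ∀ᶠ ε : ℝ≥0 in 𝓝[>] 0, (coveringNumber ε A : ℝ≥0∞) * (ε : ℝ≥0∞) ^ s < C :=
  eventually_lt_of_limsup_lt hA

end BoxContent

section Packing

variable {E : Type*} [NormedAddCommGroup E] [MeasurableSpace E] [BorelSpace E]

lemma packingNumber_mul_measure_ball_le (μ : Measure E) [μ.IsAddHaarMeasure] (A : Set E)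
    (ε : ℝ≥0) :
    (packingNumber ε A : ℝ≥0∞) * μ (ball 0 (ε / 2)) ≤ μ (thickening (ε / 2) A) := by
  simp only [packingNumber, ENat.toENNReal_iSup, ENNReal.iSup_mul, iSup_le_iff]
  intro P hPA hP
  have hdisj : Pairwise (Function.onFun Disjoint fun x : P ↦ ball (x : E) (ε / 2)) := by
    intro x y hxy
    have hε : (ε : ℝ≥0∞) < edist (x : E) y := hP x.2 y.2 (Subtype.coe_ne_coe.2 hxy)
    rw [edist_nndist, ENNReal.coe_lt_coe] at hε
    refine ball_disjoint_ball ?_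
    rw [add_halves]
    exact_mod_cast hε.le
  calc (P.encard : ℝ≥0∞) * μ (ball 0 (ε / 2))
      = ∑' x : P, μ (ball (x : E) (ε / 2)) := by
        simp only [Measure.addHaar_ball_center, ENNReal.tsum_set_const]
    _ ≤ μ (⋃ x : P, ball (x : E) (ε / 2)) :=
        tsum_meas_le_meas_iUnion_of_disjoint μ (fun _ ↦ measurableSet_ball) hdisj
    _ ≤ μ (thickening (ε / 2) A) :=
        measure_mono (iUnion_subset fun x ↦ ball_subset_thickening (hPA x.2) _)

variable [NormedSpace ℝ E] [FiniteDimensional ℝ E]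

lemma coveringNumber_mul_rpow_finrank_le (μ : Measure E) [μ.IsAddHaarMeasure] (A : Set E)
    {ε : ℝ≥0} (hε : 0 < ε) :
    (coveringNumber ε A : ℝ≥0∞) * (ε : ℝ≥0∞) ^ (finrank ℝ E : ℝ) ≤
      2 ^ finrank ℝ E * μ (thickening (ε / 2) A) / μ (ball 0 1) := by
  have hball : μ (ball 0 (ε / 2)) = (ε / 2 : ℝ≥0∞) ^ finrank ℝ E * μ (ball 0 1) := by
    rw [Measure.addHaar_ball_of_pos μ _ (by positivity), ENNReal.ofReal_pow (by positivity),
      ENNReal.ofReal_div_of_pos two_pos, ENNReal.ofReal_coe_nnreal, ENNReal.ofReal_ofNat]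
  rw [ENNReal.le_div_iff_mul_le (.inl (measure_ball_pos μ 0 one_pos).ne')
    (.inl measure_ball_lt_top.ne), ENNReal.rpow_natCast]
  calc (coveringNumber ε A : ℝ≥0∞) * (ε : ℝ≥0∞) ^ finrank ℝ E * μ (ball 0 1)
      = 2 ^ finrank ℝ E * (coveringNumber ε A * μ (ball 0 (ε / 2))) := by
        rw [hball]
        nth_rw 1 [← ENNReal.mul_div_cancel two_ne_zero ENNReal.ofNat_ne_top (b := (ε : ℝ≥0∞)),
          mul_pow]
        ring
    _ ≤ 2 ^ finrank ℝ E * (packingNumber ε A * μ (ball 0 (ε / 2))) := by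
        gcongr
        exact coveringNumber_le_packingNumber ε A
    _ ≤ 2 ^ finrank ℝ E * μ (thickening (ε / 2) A) := by
        gcongr
        exact packingNumber_mul_measure_ball_le μ A ε

end Packing

lemma upperBoxContent_finrank_ne_top_of_isBounded {E : Type*} [NormedAddCommGroup E]
    [NormedSpace ℝ E] [FiniteDimensional ℝ E] {A : Set E} (hA : Bornology.IsBounded A) :
    upperBoxContent (finrank ℝ E) A ≠ ∞ := by
  borelize E
  set μ : Measure E := Measure.addHaar
  have hfin : 2 ^ finrank ℝ E * μ (thickening 1 A) / μ (ball 0 1) < ∞ :=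
    ENNReal.div_lt_top (ENNReal.mul_ne_top (by finiteness) hA.thickening.measure_lt_top.ne)
      (measure_ball_pos μ 0 one_pos).ne'
  refine ((limsup_le_of_le (h := ?_)).trans_lt hfin).ne
  filter_upwards [Ioo_mem_nhdsGT (zero_lt_one' ℝ≥0)] with ε ⟨hε_pos, hε_lt⟩
  refine (coveringNumber_mul_rpow_finrank_le μ A hε_pos).trans ?_
  gcongr
  have : (ε : ℝ) < 1 := hε_lt
  linarith

section HausdorffContent

variable {X : Type*} [EMetricSpace X]

/-- The `s`-dimensional Hausdorff content at scale `r`: the largest outer measure that is at most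
`ediam u ^ s` on each nonempty set `u` of diameter at most `r`. Its supremum over `r > 0` is the
Hausdorff measure. -/
noncomputable def hausdorffContent (s : ℝ) (r : ℝ≥0∞) : OuterMeasure X :=
  OuterMeasure.mkMetric'.pre (fun u ↦ ediam u ^ s) r

lemma hausdorffContent_le_ediam_rpow {s : ℝ} {r : ℝ≥0∞} {u : Set X} (hu : ediam u ≤ r) :
    hausdorffContent s r u ≤ ediam u ^ s :=
  OuterMeasure.mkMetric'.pre_le hu

lemma hausdorffContent_anti {s : ℝ} {r r' : ℝ≥0∞} (h : r ≤ r') (u : Set X) :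
    hausdorffContent s r' u ≤ hausdorffContent s r u :=
  OuterMeasure.mkMetric'.mono_pre _ h u

lemma hausdorffMeasure_eq_iSup_hausdorffContent [MeasurableSpace X] [BorelSpace X] (s : ℝ)
    (u : Set X) : μH[s] u = ⨆ r > 0, hausdorffContent s r u := by
  rw [Measure.hausdorffMeasure, ← OuterMeasure.coe_mkMetric, OuterMeasure.mkMetric,
    OuterMeasure.mkMetric']
  simp only [OuterMeasure.iSup_apply, hausdorffContent]

end HausdorffContent

section Product

variable {X Y : Type*} [EMetricSpace X] [EMetricSpace Y] {A : Set X} {t : Set Y} {s d : ℝ}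

lemma ediam_prod_le (A : Set X) (t : Set Y) : ediam (A ×ˢ t) ≤ max (ediam A) (ediam t) :=
  ediam_le fun _ hx _ hy ↦ max_le_max (edist_le_ediam_of_mem hx.1 hy.1)
    (edist_le_ediam_of_mem hx.2 hy.2)

lemma hausdorffContent_prod_le_coveringNumber_mul {ε : ℝ≥0} {r : ℝ≥0∞}
    (hA : coveringNumber ε A ≠ ⊤) (ht : ediam t ≤ 2 * ε) (hr : 2 * ε ≤ r) (hs : 0 ≤ s) :
    hausdorffContent s r (A ×ˢ t) ≤ coveringNumber ε A * (2 * ε) ^ s := by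
  set pre := hausdorffContent (X := X × Y) s r
  set N := minimalCover ε A
  have hcover : A ×ˢ t ⊆ ⋃ x ∈ N, closedEBall x ε ×ˢ t := by
    simp only [← iUnion_prod_const]
    exact prod_mono_left (isCover_iff_subset_iUnion_closedEBall.1 (isCover_minimalCover hA))
  have hdiam (x : X) : ediam (closedEBall x ε ×ˢ t) ≤ 2 * ε :=
    (ediam_prod_le _ _).trans (max_le ediam_closedEBall_le ht)
  calc pre (A ×ˢ t)
      ≤ ∑' x : N, pre (closedEBall (x : X) ε ×ˢ t) :=
        (measure_mono hcover).trans (measure_biUnion_le _ finite_minimalCover.countable _)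
    _ ≤ ∑' _ : N, (2 * ε : ℝ≥0∞) ^ s :=
        ENNReal.tsum_le_tsum fun x ↦
          (hausdorffContent_le_ediam_rpow ((hdiam x).trans hr)).trans
            (ENNReal.rpow_le_rpow (hdiam x) hs)
    _ = coveringNumber ε A * (2 * ε) ^ s := by
        rw [ENNReal.tsum_set_const, encard_minimalCover hA]

lemma hausdorffContent_prod_le {ε C : ℝ≥0} {r : ℝ≥0∞} (hε : 0 < ε)
    (hA : (coveringNumber ε A : ℝ≥0∞) * (ε : ℝ≥0∞) ^ s ≤ C)
    (ht : ediam t ≤ 2 * ε) (hr : 2 * ε ≤ r) (hs : 0 ≤ s) (hd : 0 ≤ d) :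
    hausdorffContent (s + d) r (A ×ˢ t) ≤ 2 ^ s * C * (2 * ε) ^ d := by
  have hfin : coveringNumber ε A ≠ ⊤ := by
    intro htop
    simp [htop, ENNReal.top_mul, hε.ne'] at hA
  calc hausdorffContent (s + d) r (A ×ˢ t)
      ≤ coveringNumber ε A * (2 * ε) ^ (s + d) :=
        hausdorffContent_prod_le_coveringNumber_mul hfin ht hr (add_nonneg hs hd)
    _ = 2 ^ s * (coveringNumber ε A * (ε : ℝ≥0∞) ^ s) * (2 * ε) ^ d := by
        rw [ENNReal.rpow_add_of_nonneg _ _ hs hd, ENNReal.mul_rpow_of_nonneg _ _ hs]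
        ring
    _ ≤ 2 ^ s * C * (2 * ε) ^ d := by gcongr

lemma hausdorffContent_prod_le_mul_ediam_rpow {ρ C : ℝ≥0}
    (hA : ∀ ε ∈ Ioo 0 ρ, (coveringNumber ε A : ℝ≥0∞) * (ε : ℝ≥0∞) ^ s ≤ C)
    (ht : ediam t < 2 * ρ) (hs : 0 ≤ s) (hd : 0 ≤ d) :
    hausdorffContent (s + d) (2 * ρ) (A ×ˢ t) ≤ 2 ^ s * C * ediam t ^ d := by
  -- `2 * ε = ediam t` is not allowed when `ediam t = 0`, as `coveringNumber 0 A` may be infinite;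
  -- so `2 * ε` decreases to `ediam t` instead.
  lift ediam t to ℝ≥0 using ht.ne_top with δ hδ
  have hδρ : δ / 2 < ρ := by
    rw [div_lt_iff₀' two_pos]
    exact_mod_cast ht
  have hlim : Tendsto (fun ε : ℝ≥0 ↦ 2 ^ s * C * (2 * ε : ℝ≥0∞) ^ d) (𝓝[>] (δ / 2))
      (𝓝 (2 ^ s * C * (δ : ℝ≥0∞) ^ d)) := by
    have hcont : Continuous fun ε : ℝ≥0 ↦ 2 ^ s * C * (2 * ε : ℝ≥0∞) ^ d := by
      fun_prop (disch := finiteness)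
    convert! hcont.continuousWithinAt.tendsto using 3
    rw [← ENNReal.coe_ofNat, ← ENNReal.coe_mul, mul_div_cancel₀ _ two_ne_zero]
  refine ge_of_tendsto hlim ?_
  filter_upwards [Ioo_mem_nhdsGT hδρ] with ε ⟨hδε, hερ⟩
  have hε : 0 < ε := hδε.pos
  refine hausdorffContent_prod_le hε (hA ε ⟨hε, hερ⟩) ?_ ?_ hs hd
  · rw [← hδ]
    exact_mod_cast ((div_lt_iff₀' two_pos).1 hδε).le
  · gcongr

variable [MeasurableSpace Y] [BorelSpace Y]

lemma hausdorffContent_prod_le_mul_hausdorffMeasure {ρ C : ℝ≥0} (hρ : 0 < ρ) (hC : C ≠ 0)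
    (hA : ∀ ε ∈ Ioo 0 ρ, (coveringNumber ε A : ℝ≥0∞) * (ε : ℝ≥0∞) ^ s ≤ C)
    (hs : 0 ≤ s) (hd : 0 ≤ d) (F : Set Y) :
    hausdorffContent (s + d) (2 * ρ) (A ×ˢ F) ≤ 2 ^ s * C * μH[d] F := by
  set ν : OuterMeasure Y := OuterMeasure.map Prod.snd (OuterMeasure.restrict (A ×ˢ univ)
    (hausdorffContent (s + d) (2 * ρ)))
  have hν (t : Set Y) : ν t = hausdorffContent (s + d) (2 * ρ) (A ×ˢ t) := by
    rw [OuterMeasure.map_apply, OuterMeasure.restrict_apply, ← univ_prod, prod_inter_prod,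
      univ_inter, inter_univ]
  have hK₀ : 2 ^ s * (C : ℝ≥0∞) ≠ 0 := by simp [hC]
  have hK : 2 ^ s * (C : ℝ≥0∞) ≠ ∞ := by finiteness
  have hν_le : ν ≤ OuterMeasure.mkMetric ((2 ^ s * (C : ℝ≥0∞)) • fun r ↦ r ^ d) := by
    refine OuterMeasure.le_mkMetric _ _ ρ (by exact_mod_cast hρ) fun t ht ↦ ?_
    rw [hν]
    refine hausdorffContent_prod_le_mul_ediam_rpow hA (ht.trans_lt ?_) hs hd
    exact_mod_cast lt_two_mul_self hρ
  rw [← hν, Measure.hausdorffMeasure, ← OuterMeasure.coe_mkMetric, ← smul_eq_mul, ← smul_apply,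
    ← OuterMeasure.mkMetric_smul _ hK hK₀]
  exact hν_le F

variable [MeasurableSpace X] [BorelSpace X] [SecondCountableTopologyEither X Y]

theorem hausdorffMeasure_prod_le_s10 {C : ℝ≥0} (hA : upperBoxContent s A < C) (hs : 0 ≤ s)
    (hd : 0 ≤ d) (F : Set Y) :
    μH[s + d] (A ×ˢ F) ≤ 2 ^ s * C * μH[d] F := by
  obtain ⟨u, hu, hu_lt⟩ :=
    mem_nhdsGT_iff_exists_Ioo_subset.1 (eventually_coveringNumber_mul_rpow_lt hA)
  have hC : C ≠ 0 := (ENNReal.coe_pos.1 hA.pos).ne'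
  rw [hausdorffMeasure_eq_iSup_hausdorffContent]
  refine iSup₂_le fun r hr ↦ ?_
  obtain ⟨ρ, hρ, hρ_lt⟩ := ENNReal.lt_iff_exists_nnreal_btwn.1
    (lt_min (ENNReal.coe_pos.2 hu) (ENNReal.half_pos hr.ne'))
  obtain ⟨hρu, hρr⟩ := lt_min_iff.1 hρ_lt
  have hρr' : 2 * (ρ : ℝ≥0∞) ≤ r := by
    rw [mul_comm]
    exact (ENNReal.le_div_iff_mul_le (.inl two_ne_zero) (.inl ENNReal.ofNat_ne_top)).1 hρr.le
  refine (hausdorffContent_anti hρr' _).trans ?_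
  exact hausdorffContent_prod_le_mul_hausdorffMeasure (by exact_mod_cast hρ) hC
    (fun ε hε ↦ (hu_lt ⟨hε.1, hε.2.trans (by exact_mod_cast hρu)⟩).le) hs hd F

theorem hausdorffMeasure_prod_eq_zero (hA : upperBoxContent s A ≠ ∞) (hs : 0 ≤ s)
    (hd : 0 ≤ d) {F : Set Y} (hF : μH[d] F = 0) :
    μH[s + d] (A ×ˢ F) = 0 := by
  obtain ⟨C, hC, -⟩ := ENNReal.lt_iff_exists_nnreal_btwn.1 hA.lt_top
  simpa only [hF, mul_zero, nonpos_iff_eq_zero] using hausdorffMeasure_prod_le_s10 hC hs hd F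

end Product

theorem product_with_disk_hausdorff_null_general {E Y : Type*} [NormedAddCommGroup E]
    [NormedSpace ℝ E] [FiniteDimensional ℝ E] [MeasurableSpace E] [BorelSpace E]
    [EMetricSpace Y] [MeasurableSpace Y] [BorelSpace Y] {d : ℝ} (hd : 0 ≤ d)
    (A : Set E) {F : Set Y} (hF : μH[d] F = 0) :
    μH[finrank ℝ E + d] (A ×ˢ F) = 0 := by
  have hball (k : ℕ) : μH[finrank ℝ E + d] (closedBall (0 : E) k ×ˢ F) = 0 :=
    hausdorffMeasure_prod_eq_zero (upperBoxContent_finrank_ne_top_of_isBounded isBounded_closedBall)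
      (Nat.cast_nonneg _) hd hF
  refine measure_mono_null (prod_mono_left (subset_univ A)) ?_
  rw [← iUnion_closedBall_nat (0 : E), iUnion_prod_const]
  exact measure_iUnion_null hball

/-- if `μH[n-2](F) = 0` in ℝⁿ, then the product `D̄ × F` with the
closed unit disk of ℝ² has zero `n`-dimensional Hausdorff measure in the product
metric space ℝ² × ℝⁿ. -/
theorem product_with_disk_hausdorff_null
    (n : ℕ) (hn : 3 ≤ n)
    (F : Set (EuclideanSpace ℝ (Fin n)))
    (hF_null : μH[(n : ℝ) - 2] F = 0) :
    μH[(n : ℝ)] ((Metric.closedBall (0 : EuclideanSpace ℝ (Fin 2)) 1) ×ˢ F :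
      Set (EuclideanSpace ℝ (Fin 2) × EuclideanSpace ℝ (Fin n))) = 0 := by
  have hd : (0 : ℝ) ≤ n - 2 := sub_nonneg.2 (by exact_mod_cast (by lia : 2 ≤ n))
  have h := product_with_disk_hausdorff_null_general hd
    (Metric.closedBall (0 : EuclideanSpace ℝ (Fin 2)) 1) hF_null
  rwa [finrank_euclideanSpace_fin, Nat.cast_ofNat, add_sub_cancel] at h
end

section
/- Let n ≥ 2, let λ > 0, let A be a linear isometric automorphism of ℝⁿ, and define g on ℝⁿ ∖ {0} by g(x) = (λ/‖x‖²) • (A x). Assume g(g(x)) = x for all x ≠ 0 and that g has no fixed point in ℝⁿ ∖ {0}. Then A = −id, i.e. g(x) = −(λ/‖x‖²) • x for all x ≠ 0; moreover, with h(x) = √λ • x, one has h⁻¹(g(h(x))) = −(1/‖x‖²) • x for all x ≠ 0, so g is conjugate by a homothety to the standard inversion ι(x) = −x/‖x‖². -/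
open Filter Topology

/-!
The map `g` is the inversion in the sphere of radius `√λ` followed by `A`, and these two commute.
Hence `g ∘ g = A ∘ A`, so `A` is an involution. A nonzero vector fixed by `A`, rescaled to norm
`√λ`, is fixed by `g`; since `x + A x` is fixed by `A`, it must vanish for every `x`.
-/

theorem map_eq_neg_of_involutive_of_fixedPointFree {F G : Type*} [AddCommGroup G] [FunLike F G G]
    [AddHomClass F G G] {φ : F} (hφ : Function.Involutive φ) (hfix : ∀ x, φ x = x → x = 0)
    (x : G) : φ x = -x := by
  have hfixed : φ (x + φ x) = x + φ x := by rw [map_add, hφ x, add_comm]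
  exact eq_neg_of_add_eq_zero_right (hfix _ hfixed)

section TwistedInversion

variable {E F G : Type*} [NormedAddCommGroup E] [NormedSpace ℝ E]
  [NormedAddCommGroup F] [NormedSpace ℝ F] [NormedAddCommGroup G] [NormedSpace ℝ G]

/-- The map `x ↦ (r / ‖x‖ ^ 2) • A x`: for `0 < r`, the inversion in the sphere of radius `√r`
centred at `0`, followed by the linear isometry `A`. It swaps `0` and `∞` in the paper; here it
sends `0` to `0`. Mathlib's `EuclideanGeometry.inversion` requires an inner product space. -/
noncomputable def twistedInversion (r : ℝ) (A : E →ₗᵢ[ℝ] F) (x : E) : F :=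
  (r / ‖x‖ ^ 2) • A x

@[simp]
theorem twistedInversion_zero (r : ℝ) (A : E →ₗᵢ[ℝ] F) : twistedInversion r A 0 = 0 := by
  simp [twistedInversion]

theorem twistedInversion_ne_zero {r : ℝ} (hr : r ≠ 0) (A : E →ₗᵢ[ℝ] F) {x : E} (hx : x ≠ 0) :
    twistedInversion r A x ≠ 0 :=
  smul_ne_zero (div_ne_zero hr (pow_ne_zero 2 (norm_ne_zero_iff.mpr hx)))
    ((map_ne_zero_iff A A.injective).mpr hx)

theorem twistedInversion_smul (r : ℝ) (A : E →ₗᵢ[ℝ] F) (c : ℝ) (x : E) :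
    twistedInversion r A (c • x) = c⁻¹ • twistedInversion r A x := by
  rcases eq_or_ne c 0 with rfl | hc
  · simp
  · simp only [twistedInversion, norm_smul, Real.norm_eq_abs, mul_pow, sq_abs, map_smul, smul_smul]
    congr 1
    field

theorem inv_smul_twistedInversion_smul {c : ℝ} (hc : c ≠ 0) (A : E →ₗᵢ[ℝ] F) (x : E) :
    c⁻¹ • twistedInversion (c ^ 2) A (c • x) = twistedInversion 1 A x := by
  rw [twistedInversion_smul, twistedInversion, twistedInversion, smul_smul, smul_smul]
  congr 1
  field

theorem twistedInversion_twistedInversion (r s : ℝ) (B : F →ₗᵢ[ℝ] G) (A : E →ₗᵢ[ℝ] F) (x : E) :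
    twistedInversion r B (twistedInversion s A x) = (r / s) • B (A x) := by
  rcases eq_or_ne x 0 with rfl | hx
  · simp
  · have hnorm : ‖x‖ ≠ 0 := norm_ne_zero_iff.mpr hx
    rw [twistedInversion.eq_def s, twistedInversion_smul, twistedInversion, A.norm_map, smul_smul]
    congr 1
    field

theorem involutive_twistedInversion_iff {r : ℝ} (hr : r ≠ 0) {A : E →ₗᵢ[ℝ] E} :
    Function.Involutive (twistedInversion r A) ↔ Function.Involutive A := by
  simp only [Function.Involutive, twistedInversion_twistedInversion, div_self hr, one_smul]

theorem exists_twistedInversion_eq_self {r : ℝ} (hr : 0 < r) {A : E →ₗᵢ[ℝ] E} {v : E}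
    (hv : v ≠ 0) (hAv : A v = v) : ∃ x ≠ 0, twistedInversion r A x = x := by
  have hnorm : ‖v‖ ≠ 0 := norm_ne_zero_iff.mpr hv
  have hsqrt : √r ≠ 0 := (Real.sqrt_pos.mpr hr).ne'
  refine ⟨(√r / ‖v‖) • v, smul_ne_zero (div_ne_zero hsqrt hnorm) hv, ?_⟩
  rw [twistedInversion_smul, twistedInversion, hAv, smul_smul]
  congr 1
  field_simp
  exact (Real.sq_sqrt hr.le).symm

theorem map_eq_neg_of_involutive_twistedInversion {r : ℝ} (hr : 0 < r) {A : E →ₗᵢ[ℝ] E}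
    (hinv : Function.Involutive (twistedInversion r A))
    (hfree : ∀ x ≠ 0, twistedInversion r A x ≠ x) (x : E) : A x = -x := by
  refine map_eq_neg_of_involutive_of_fixedPointFree
    ((involutive_twistedInversion_iff hr.ne').mp hinv) (fun v hAv ↦ ?_) x
  by_contra hv
  obtain ⟨y, hy, hfixed⟩ := exists_twistedInversion_eq_self hr hv hAv
  exact hfree y hy hfixed

theorem involution_conjugate_to_inversion_general {r : ℝ} (hr : 0 < r) (A : E →ₗᵢ[ℝ] E)
    {g : E → E} (hg : ∀ x, x ≠ 0 → g x = (r / ‖x‖ ^ 2) • A x)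
    (hg_inv : ∀ x, x ≠ 0 → g (g x) = x) (hg_free : ∀ x, x ≠ 0 → g x ≠ x) :
    (∀ x, A x = -x) ∧
    (∀ x, x ≠ 0 → g x = -((r / ‖x‖ ^ 2) • x)) ∧
    (∀ x, x ≠ 0 → (√r)⁻¹ • g (√r • x) = -((1 / ‖x‖ ^ 2) • x)) := by
  have hgA : ∀ x, x ≠ 0 → g x = twistedInversion r A x := hg
  have hinv : Function.Involutive (twistedInversion r A) := fun x ↦ by
    rcases eq_or_ne x 0 with rfl | hx
    · simp
    · rw [← hgA _ (twistedInversion_ne_zero hr.ne' A hx), ← hgA x hx, hg_inv x hx]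
  have hA : ∀ x, A x = -x :=
    map_eq_neg_of_involutive_twistedInversion hr hinv fun x hx ↦ hgA x hx ▸ hg_free x hx
  have hsqrt : √r ≠ 0 := (Real.sqrt_pos.mpr hr).ne'
  have hconj (x : E) : (√r)⁻¹ • twistedInversion r A (√r • x) = twistedInversion 1 A x := by
    simpa only [Real.sq_sqrt hr.le] using inv_smul_twistedInversion_smul hsqrt A x
  refine ⟨hA, fun x hx ↦ ?_, fun x hx ↦ ?_⟩
  · rw [hg x hx, hA, smul_neg]
  · rw [hgA _ (smul_ne_zero hsqrt hx), hconj, twistedInversion, hA, smul_neg]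

end TwistedInversion

/-- a fixed-point-free conformal involution of `ℝⁿ \ {0}` of the form
`g(x) = (λ/‖x‖²) • A x` has `A = -id`, and `g` is conjugate by the homothety
`h(x) = √λ • x` to the standard inversion `ι(x) = -x/‖x‖²`. -/
theorem involution_conjugate_to_inversion
    (n : ℕ) (hn : 2 ≤ n)
    (lam : ℝ) (hlam : 0 < lam)
    (A : EuclideanSpace ℝ (Fin n) ≃ₗᵢ[ℝ] EuclideanSpace ℝ (Fin n))
    (g : EuclideanSpace ℝ (Fin n) → EuclideanSpace ℝ (Fin n))
    (hg : ∀ x : EuclideanSpace ℝ (Fin n), x ≠ 0 → g x = (lam / ‖x‖ ^ 2) • A x)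
    (hg_inv : ∀ x : EuclideanSpace ℝ (Fin n), x ≠ 0 → g (g x) = x)
    (hg_free : ∀ x : EuclideanSpace ℝ (Fin n), x ≠ 0 → g x ≠ x) :
    (∀ x : EuclideanSpace ℝ (Fin n), A x = -x) ∧
    (∀ x : EuclideanSpace ℝ (Fin n), x ≠ 0 → g x = -((lam / ‖x‖ ^ 2) • x)) ∧
    (∀ x : EuclideanSpace ℝ (Fin n), x ≠ 0 →
      (Real.sqrt lam)⁻¹ • g (Real.sqrt lam • x) = -((1 / ‖x‖ ^ 2) • x)) :=
  involution_conjugate_to_inversion_general hlam A.toLinearIsometry hg hg_inv hg_free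
end

section
/- Let X be a Hausdorff topological space, Y a topological space, and f : X → Y a continuous open map. Suppose D ⊆ X is a dense open subset such that the restriction of f to D is injective. Then f is injective on all of X. -/
open Filter Topology

/-!
Two distinct points of a fibre of `f` have disjoint open neighbourhoods `U` and `V`. Injectivity
on `D` makes the open sets `f '' (U ∩ D)` and `f '' (V ∩ D)` disjoint, and these are dense in the
open sets `f '' U` and `f '' V`, which are therefore disjoint too. But both contain the common
value of `f`.
-/

section

variable {X Y : Type*} [TopologicalSpace X] [TopologicalSpace Y] {f : X → Y} {D U V : Set X}

theorem image_subset_closure_image_inter_of_dense (hf_cont : Continuous f) (hD_dense : Dense D)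
    (hU : IsOpen U) : f '' U ⊆ closure (f '' (U ∩ D)) :=
  calc
    f '' U ⊆ f '' closure (U ∩ D) := Set.image_mono (hD_dense.open_subset_closure_inter hU)
    _ ⊆ closure (f '' (U ∩ D)) := image_closure_subset_closure_image hf_cont

theorem disjoint_image_of_injOn_dense_open (hf_cont : Continuous f) (hf_open : IsOpenMap f)
    (hD_open : IsOpen D) (hD_dense : Dense D) (hf_inj : Set.InjOn f D)
    (hU : IsOpen U) (hV : IsOpen V) (hUV : Disjoint U V) : Disjoint (f '' U) (f '' V) := by
  have disjoint_on_D : Disjoint (f '' (U ∩ D)) (f '' (V ∩ D)) :=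
    hUV.inter_left D |>.inter_right D |>.image hf_inj Set.inter_subset_right Set.inter_subset_right
  have disjoint_left_on_D : Disjoint (f '' (U ∩ D)) (f '' V) :=
    (disjoint_on_D.closure_right (hf_open _ (hU.inter hD_open))).mono_right
      (image_subset_closure_image_inter_of_dense hf_cont hD_dense hV)
  exact (disjoint_left_on_D.closure_left (hf_open V hV)).mono_left
    (image_subset_closure_image_inter_of_dense hf_cont hD_dense hU)

theorem injective_of_injOn_dense_open_general (hf_sep : IsSeparatedMap f)
    (hf_cont : Continuous f) (hf_open : IsOpenMap f)
    (hD_open : IsOpen D) (hD_dense : Dense D) (hf_inj : Set.InjOn f D) :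
    Function.Injective f := by
  intro x y hxy
  by_contra hne
  obtain ⟨U, V, hU, hV, hxU, hyV, hUV⟩ := hf_sep x y hxy hne
  have disjoint_images : Disjoint (f '' U) (f '' V) :=
    disjoint_image_of_injOn_dense_open hf_cont hf_open hD_open hD_dense hf_inj hU hV hUV
  exact disjoint_images.ne_of_mem (Set.mem_image_of_mem f hxU) (Set.mem_image_of_mem f hyV) hxy

end

/-- a continuous open map into no-matter-which space, from a Hausdorff
space, which is injective on a dense open subset, is injective. -/
theorem injective_of_injOn_dense_open
    {X Y : Type*} [TopologicalSpace X] [T2Space X] [TopologicalSpace Y]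
    (f : X → Y) (hf_cont : Continuous f) (hf_open : IsOpenMap f)
    (D : Set X) (hD_open : IsOpen D) (hD_dense : Dense D)
    (hf_inj : Set.InjOn f D) :
    Function.Injective f :=
  injective_of_injOn_dense_open_general (T2Space.isSeparatedMap f) hf_cont hf_open
    hD_open hD_dense hf_inj
end
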